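/- arXiv:0909.3287 — 3 statements merged into one kernel-verified Lean document; each statement's English description precedes it below -/
import Mathlib

section
/- Let n ≥ 1 and K > 0. There exists a constant c > 0, depending only on n and K, with the following property. Let R > 0, let φ : ℝ → ℝ be smooth with sup|φ'| + sup|φ''| ≤ K, let σ ≥ cR², and let g : ℝⁿ × ℝ → ℂ be smooth and compactly supported, with support contained in the set {(x,t) : |x/R + φ(t)e₁| ≥ 1}, where e₁ is the first standard basis vector of ℝⁿ. Then (σ^{3/2}/R²) ‖e^{σ|x/R + φ(t)e₁|²} g‖_{L²(ℝⁿ×ℝ, dx dt)} ≤ c ‖e^{σ|x/R + φ(t)e₁|²} (i∂ₜg + Δg)‖_{L²(ℝⁿ×ℝ, dx dt)}. -/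
/-!
The proof is the commutator method. Put `y = x / R + φ(t) e₁`, `ψ = σ |y|²` and `f = exp ψ · g`.
Conjugating `i∂ₜ + Δ` by `exp ψ` turns it into
`P = i(∂ₜ - ψₜ) + ∑ᵢ (∂ᵢ - ∂ᵢψ)²`, so `exp ψ · (i∂ₜ + Δ)g = P f` (`abstract_conj`). Split
`P = S + A` into its symmetric and skew-symmetric parts; then `‖P f‖² ≥ ⟨f, [S, A] f⟩`.

Since the spatial Hessian of `ψ` is the constant matrix `h · Id` with `h = 2σ / R²`, the commutator
is explicit (`abstract_commutator`): with `γᵢ = R φ'(t) eᵢ / 2`,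
`⟨f, [S, A] f⟩ = 4h ∑ᵢ ‖(∂ᵢ + iγᵢ) f‖² + ⟨f, m f⟩`, where
`m = 4h |∇ψ|² + ψₜₜ - 4h |γ|² = 32 σ³ R⁻⁴ |y|² + 2σ φ''(t) (e₁ · y)`.
The terms in `φ'²` cancel. On the support of `g`, where `|y| ≥ 1`, the condition `σ ≥ (K + 1) R²`
gives `m ≥ σ³ / R⁴`, which is the square of the claimed inequality (`weighted_bound`).

The algebra is carried out for abstract operators on a complex vector space `V` mapped into an inner
product space by `J : V → H`; this is applied to the inclusion of test functions in `L²`.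
-/

open MeasureTheory Complex Filter Set
open scoped ENNReal

/-- The Laplacian in the spatial variables, via the second iterated Fréchet derivative. -/
noncomputable def spatialLaplacian {n : ℕ} (f : EuclideanSpace ℝ (Fin n) → ℂ)
    (x : EuclideanSpace ℝ (Fin n)) : ℂ :=
  ∑ i : Fin n, iteratedFDeriv ℝ 2 f x ![EuclideanSpace.single i 1, EuclideanSpace.single i 1]

/-! ### Commutator identities for abstract operators -/

section abs
variable {V H ι : Type*} [AddCommGroup V] [Module ℂ V] [NormedAddCommGroup H]
  [InnerProductSpace ℂ H] [Fintype ι]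

/-- `X` is formally symmetric on `V` for the inner product pulled back along `J`. No boundedness
or continuity of `X` is required, so differential operators qualify. -/
def FSymm (J : V →ₗ[ℂ] H) (X : Module.End ℂ V) : Prop :=
  ∀ u v, inner ℂ (J (X u)) (J v) = inner ℂ (J u) (J (X v))

/-- `X` is formally skew-symmetric on `V` for the inner product pulled back along `J`. -/
def FSkew (J : V →ₗ[ℂ] H) (X : Module.End ℂ V) : Prop :=
  ∀ u v, inner ℂ (J (X u)) (J v) = -inner ℂ (J u) (J (X v))

theorem commutator_sq (D B : Module.End ℂ V) (h : ℂ) (hDB : D * B - B * D = h • 1) :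
    ⁅D * D + B * B, D * B + B * D⁆ = (4 * h) • (D * D) - (4 * h) • (B * B) := by
  have e : D * B = B * D + h • 1 := by rw [← hDB]; abel
  have e1 : D * (D * B) = B * (D * D) + (2 * h) • D := by
    rw [e, mul_add, ← mul_assoc, e, add_mul, mul_assoc]
    simp only [smul_mul_assoc, mul_smul_comm, one_mul, mul_one]; module
  have e2 (X : Module.End ℂ V) : D * (B * X) = B * (D * X) + h • X := by
    rw [← mul_assoc, e, add_mul, mul_assoc]; simp
  rw [Ring.lie_def]
  simp only [add_mul, mul_add, mul_assoc, e2, e, mul_smul_comm, smul_mul_assoc, mul_one, one_mul,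
    smul_add]
  module

/-- The commutator of the symmetric and skew parts of
`i(T - Q) + ∑ (D i - B i)²`. The cross terms `[T, D B + B D]` and `[D² + B², Q]` both equal
`4h G D`; completing the square absorbs them into `(D i + i G i)²` at the cost of the zeroth-order
term `-4h G i²`. -/
theorem abstract_commutator [DecidableEq ι] (D B G : ι → Module.End ℂ V)
    (T Q W : Module.End ℂ V) (h : ℂ)
    (hDB : ∀ i j, ⁅D i, B j⁆ = if i = j then h • 1 else 0)
    (hDD : ∀ i j, ⁅D i, D j⁆ = 0) (hBB : ∀ i j, ⁅B i, B j⁆ = 0)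
    (hTD : ∀ i, ⁅T, D i⁆ = 0) (hTB : ∀ i, ⁅T, B i⁆ = (2 * h) • G i)
    (hDQ : ∀ i, ⁅D i, Q⁆ = (2 * h) • G i) (hBQ : ∀ i, ⁅B i, Q⁆ = 0)
    (hDG : ∀ i, ⁅D i, G i⁆ = 0) (hTQ : ⁅T, Q⁆ = W) :
    ⁅I • T + ∑ i, (D i * D i + B i * B i), -(∑ i, (D i * B i + B i * D i)) - I • Q⁆
      = ∑ i, (-(4 * h) • ((D i + I • G i) * (D i + I • G i)))
        + (∑ i, (4 * h) • (B i * B i) + W - ∑ i, (4 * h) • (G i * G i)) := by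
  have h1 : ∀ i j, ⁅D i * D i + B i * B i, D j * B j + B j * D j⁆
      = if i = j then (4 * h) • (D i * D i) - (4 * h) • (B i * B i) else 0 := by
    intro i j
    split_ifs with hij
    · subst hij
      refine commutator_sq _ _ _ ?_
      rw [← Ring.lie_def, hDB]; simp
    · have c1 : Commute (D i) (D j) := by
        rw [commute_iff_lie_eq]; exact hDD i j
      have c2 : Commute (D i) (B j) := by
        rw [commute_iff_lie_eq, hDB, if_neg hij]
      have c3 : Commute (B i) (B j) := by
        rw [commute_iff_lie_eq]; exact hBB i j
      have c4 : Commute (B i) (D j) := by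
        apply Commute.symm
        rw [commute_iff_lie_eq, hDB, if_neg (Ne.symm hij)]
      rw [← commute_iff_lie_eq]
      have c5 : Commute (D i) (D j * B j + B j * D j) :=
        (c1.mul_right c2).add_right (c2.mul_right c1)
      have c6 : Commute (B i) (D j * B j + B j * D j) :=
        (c4.mul_right c3).add_right (c3.mul_right c4)
      exact (c5.mul_left c5).add_left (c6.mul_left c6)
  have h2 : ∀ i, ⁅T, D i * B i + B i * D i⁆ = (4 * h) • (G i * D i) := by
    intro i
    have a := hTB i; have b := hTD i; have c := hDG i
    rw [Ring.lie_def] at a b c ⊢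
    have a' : T * B i = B i * T + (2 * h) • G i := by rw [← a]; abel
    have b' := sub_eq_zero.1 b
    have c' := sub_eq_zero.1 c
    simp only [mul_add, add_mul, ← mul_assoc, a', b']
    simp only [mul_assoc, a', b']
    simp only [mul_add, mul_smul_comm, smul_mul_assoc, c']
    module
  have h3 : ∀ i, ⁅D i * D i + B i * B i, Q⁆ = (4 * h) • (G i * D i) := by
    intro i
    have a := hDQ i; have b := hBQ i; have c := hDG i
    rw [Ring.lie_def] at a b c ⊢
    have a' : D i * Q = Q * D i + (2 * h) • G i := by rw [← a]; abel
    have b' := sub_eq_zero.1 b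
    have c' := sub_eq_zero.1 c
    simp only [mul_add, add_mul, mul_assoc, a', b']
    simp only [mul_smul_comm, c']
    simp only [← mul_assoc, a', b']
    simp only [add_mul, smul_mul_assoc]
    module
  have h4 : ∀ i, (D i + I • G i) * (D i + I • G i)
      = D i * D i + (2 * I) • (G i * D i) - G i * G i := by
    intro i
    have c := hDG i
    rw [Ring.lie_def] at c
    have c' := sub_eq_zero.1 c
    simp only [mul_add, add_mul, smul_mul_assoc, mul_smul_comm, c', smul_smul, smul_add, I_mul_I]
    module
  simp only [h4]
  have g1 : ∀ X C : Module.End ℂ V, ⁅I • T + X, -C - I • Q⁆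
      = ⁅T, Q⁆ - ⁅X, C⁆ - I • ⁅T, C⁆ - I • ⁅X, Q⁆ := by
    intro X C
    simp only [Ring.lie_def, mul_sub, sub_mul, mul_add, add_mul, mul_neg, neg_mul, smul_mul_assoc,
      mul_smul_comm, smul_smul, smul_add, smul_sub, smul_neg, I_mul_I]
    module
  have g2 : ∀ (X : ι → Module.End ℂ V) (Y : Module.End ℂ V), ⁅∑ i, X i, Y⁆ = ∑ i, ⁅X i, Y⁆ := by
    intro X Y
    simp only [Ring.lie_def, Finset.sum_mul, Finset.mul_sum, Finset.sum_sub_distrib]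
  have g3 : ∀ (X : ι → Module.End ℂ V) (Y : Module.End ℂ V), ⁅Y, ∑ i, X i⁆ = ∑ i, ⁅Y, X i⁆ := by
    intro X Y
    simp only [Ring.lie_def, Finset.sum_mul, Finset.mul_sum, Finset.sum_sub_distrib]
  rw [g1, hTQ]
  simp only [g2, g3, h1, h2, h3, Finset.sum_ite_eq, Finset.mem_univ, if_true, Finset.smul_sum]
  have g4 : ∀ i, -(4 * h) • (D i * D i + (2 * I) • (G i * D i) - G i * G i)
      = -((4 * h) • (D i * D i) - (4 * h) • (B i * B i)) - I • (4 * h) • (G i * D i)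
        - I • (4 * h) • (G i * D i) - (4 * h) • (B i * B i) + (4 * h) • (G i * G i) := by
    intro i; module
  simp only [g4, Finset.sum_add_distrib, Finset.sum_sub_distrib, Finset.sum_neg_distrib]
  abel

/-- The commutator inequality `‖(S + A) f‖² ≥ Re ⟨f, [S, A] f⟩` for `S` symmetric and `A` skew,
in which the nonnegative terms `4h ‖(D i + i G i) f‖²` are discarded. -/
theorem abstract_bound [DecidableEq ι] (J : V →ₗ[ℂ] H) (D B G : ι → Module.End ℂ V)
    (T Q W : Module.End ℂ V)
    (h : ℝ) (hh : 0 ≤ h)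
    (hDB : ∀ i j, ⁅D i, B j⁆ = if i = j then (h : ℂ) • 1 else 0)
    (hDD : ∀ i j, ⁅D i, D j⁆ = 0) (hBB : ∀ i j, ⁅B i, B j⁆ = 0)
    (hTD : ∀ i, ⁅T, D i⁆ = 0) (hTB : ∀ i, ⁅T, B i⁆ = (2 * h : ℂ) • G i)
    (hDQ : ∀ i, ⁅D i, Q⁆ = (2 * h : ℂ) • G i) (hBQ : ∀ i, ⁅B i, Q⁆ = 0)
    (hDG : ∀ i, ⁅D i, G i⁆ = 0) (hTQ : ⁅T, Q⁆ = W)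
    (sD : ∀ i, FSkew J (D i)) (sB : ∀ i, FSymm J (B i)) (sG : ∀ i, FSymm J (G i))
    (sT : FSkew J T) (sQ : FSymm J Q) (f : V) :
    (inner ℂ (J f)
        (J ((∑ i, (4 * h : ℂ) • (B i * B i) + W - ∑ i, (4 * h : ℂ) • (G i * G i)) f))).re
      ≤ ‖J ((I • (T - Q) + ∑ i, (D i - B i) * (D i - B i)) f)‖ ^ 2 := by
  set S : Module.End ℂ V := I • T + ∑ i, (D i * D i + B i * B i) with hS
  set A : Module.End ℂ V := -(∑ i, (D i * B i + B i * D i)) - I • Q with hA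
  have hP : I • (T - Q) + ∑ i, (D i - B i) * (D i - B i) = S + A := by
    rw [hS, hA, sub_eq_add_neg _ (I • Q), ← Finset.sum_neg_distrib]
    have : ∀ i, (D i - B i) * (D i - B i)
        = (D i * D i + B i * B i) + -(D i * B i + B i * D i) := by
      intro i; noncomm_ring
    simp only [this]
    rw [Finset.sum_add_distrib (f := fun i => D i * D i + B i * B i)]
    module
  have sD' : ∀ i u v, inner ℂ (J (D i u)) (J v) = -inner ℂ (J u) (J (D i v)) := sD
  have sB' : ∀ i u v, inner ℂ (J (B i u)) (J v) = inner ℂ (J u) (J (B i v)) := sB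
  have symS : FSymm J S := by
    intro u v
    simp only [hS, LinearMap.add_apply, LinearMap.smul_apply, LinearMap.sum_apply, map_add,
      map_smul, map_sum, inner_add_left, inner_add_right, inner_smul_left, inner_smul_right,
      sum_inner,
      inner_sum, Module.End.mul_apply]
    simp only [sT u, sD', sB', conj_I]
    simp
  have skA : FSkew J A := by
    intro u v
    simp only [hA, LinearMap.sub_apply, LinearMap.neg_apply, LinearMap.add_apply,
      LinearMap.smul_apply, LinearMap.sum_apply, map_add, map_sub, map_neg, map_smul, map_sum,
      inner_add_left, inner_add_right, inner_sub_left, inner_sub_right, inner_neg_left,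
      inner_neg_right, inner_smul_left, inner_smul_right, sum_inner, inner_sum,
      Module.End.mul_apply]
    simp only [sQ u, sD', sB', conj_I]
    simp [Finset.sum_add_distrib]
    ring
  have skE : ∀ i, FSkew J (D i + I • G i) := by
    intro i u v
    simp only [LinearMap.add_apply, LinearMap.smul_apply, map_add, map_smul,
      inner_add_left, inner_add_right, inner_smul_left, inner_smul_right]
    simp only [sD i u, sG i u, conj_I]
    ring
  have key := abstract_commutator D B G T Q W h hDB hDD hBB hTD hTB hDQ hBQ hDG hTQ
  set N := (∑ i, (4 * h : ℂ) • (B i * B i) + W - ∑ i, (4 * h : ℂ) • (G i * G i)) with hN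
  have e1 : inner ℂ (J (S f)) (J (A f)) + inner ℂ (J (A f)) (J (S f))
      = inner ℂ (J f) (J (⁅S, A⁆ f)) := by
    rw [symS, skA, Ring.lie_def, LinearMap.sub_apply (S * A), map_sub J ((S * A) f),
      inner_sub_right]
    simp only [Module.End.mul_apply]; ring
  have e2 : inner ℂ (J f) (J (⁅S, A⁆ f))
      = ∑ i, (4 * h : ℂ) * inner ℂ (J ((D i + I • G i) f)) (J ((D i + I • G i) f))
        + inner ℂ (J f) (J (N f)) := by
    rw [key]
    simp only [skE _ f]
    simp only [LinearMap.add_apply _ N, map_add _ _ (N f), inner_add_right _ _ (J (N f)),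
      LinearMap.sum_apply, map_sum, inner_sum, neg_smul, LinearMap.neg_apply, LinearMap.smul_apply,
      map_neg, map_smul,
      inner_neg_right, inner_smul_right, Module.End.mul_apply, mul_neg]
  have e3 : 0 ≤
      (∑ i, (4 * h : ℂ) * inner ℂ (J ((D i + I • G i) f)) (J ((D i + I • G i) f))).re := by
    rw [re_sum]
    refine Finset.sum_nonneg fun i _ => ?_
    rw [inner_self_eq_norm_sq_to_K]
    have : (4 * (h:ℂ) * (‖J ((D i + I • G i) f)‖ : ℂ) ^ 2).re
        = 4 * h * ‖J ((D i + I • G i) f)‖ ^ 2 := by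
      norm_cast
    have := this.symm ▸ (by positivity : 0 ≤ 4 * h * ‖J ((D i + I • G i) f)‖ ^ 2)
    exact this
  rw [hP, LinearMap.add_apply, map_add, @norm_add_sq ℂ]
  have e4 := congrArg Complex.re (e1.trans e2)
  rw [add_re, add_re, ← inner_conj_symm (J (A f)), conj_re] at e4
  have := sq_nonneg ‖J (S f)‖
  have := sq_nonneg ‖J (A f)‖
  simp only [RCLike.re_eq_complex_re]
  linarith

/-- If `M` is multiplication by `exp ψ`, with `B i` and `Q` multiplication by the derivatives
of `ψ`, then conjugation by `M` replaces `D i` by `D i - B i` and `T` by `T - Q`. -/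
theorem abstract_conj (D B : ι → Module.End ℂ V) (T Q M : Module.End ℂ V)
    (hDM : ∀ i, ⁅D i, M⁆ = B i * M) (hTM : ⁅T, M⁆ = Q * M) :
    (I • (T - Q) + ∑ i, (D i - B i) * (D i - B i)) * M = M * (I • T + ∑ i, D i * D i) := by
  have h1 : ∀ i, (D i - B i) * M = M * D i := by
    intro i
    rw [sub_mul, ← hDM i, Ring.lie_def]; abel
  have h2 : (T - Q) * M = M * T := by
    rw [sub_mul, ← hTM, Ring.lie_def]; abel
  rw [add_mul, mul_add, Finset.sum_mul, Finset.mul_sum, smul_mul_assoc, h2, mul_smul_comm]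
  congr 1
  refine Finset.sum_congr rfl fun i _ => ?_
  rw [mul_assoc, h1, ← mul_assoc, h1, mul_assoc]

end abs

/-! ### Operators on test functions -/

section conc

/-- Space-time `ℝⁿ × ℝ`; the Euclidean norm is used on the spatial factor. -/
abbrev SpaceTime (n : ℕ) := EuclideanSpace ℝ (Fin n) × ℝ

instance (n : ℕ) : (volume : Measure (SpaceTime n)).IsAddHaarMeasure := by
  rw [Measure.volume_eq_prod]; infer_instance

variable {n : ℕ}

/-- Smooth compactly supported complex-valued functions on space-time, as a subspace of all
functions. -/
def TestFn (n : ℕ) : Submodule ℂ (SpaceTime n → ℂ) where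
  carrier := {f | ContDiff ℝ (⊤ : ℕ∞) f ∧ HasCompactSupport f}
  add_mem' := fun ha hb => ⟨ha.1.add hb.1, ha.2.add hb.2⟩
  zero_mem' := ⟨contDiff_const, HasCompactSupport.zero⟩
  smul_mem' := fun c _ hf => ⟨hf.1.const_smul c, hf.2.smul_left (f := fun _ => c)⟩

theorem TestFn.smooth (u : TestFn n) : ContDiff ℝ (⊤ : ℕ∞) (u : SpaceTime n → ℂ) := u.2.1
theorem TestFn.compact (u : TestFn n) : HasCompactSupport (u : SpaceTime n → ℂ) := u.2.2
theorem TestFn.diff (u : TestFn n) : Differentiable ℝ (u : SpaceTime n → ℂ) :=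
  u.2.1.differentiable (by simp)
theorem TestFn.memLp (u : TestFn n) : MemLp (u : SpaceTime n → ℂ) 2 volume :=
  (TestFn.smooth u).continuous.memLp_of_hasCompactSupport (TestFn.compact u)

theorem fderiv_apply_mem_testFn {f : SpaceTime n → ℂ} (hf : f ∈ TestFn n) (v : SpaceTime n) :
    (fun z => fderiv ℝ f z v) ∈ TestFn n := by
  have h1 : ContDiff ℝ (⊤ : ℕ∞) (fderiv ℝ f) := hf.1.fderiv_right (by simp)
  have h2 : HasCompactSupport (fun z => fderiv ℝ f z v) := HasCompactSupport.fderiv_apply ℝ hf.2 v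
  exact ⟨h1.clm_apply contDiff_const, h2⟩

/-- The directional derivative along `v`, as an operator on test functions. -/
noncomputable def derivOp (v : SpaceTime n) : Module.End ℂ (TestFn n) where
  toFun u := ⟨fun z => fderiv ℝ u.1 z v, fderiv_apply_mem_testFn u.2 v⟩
  map_add' u w := by
    ext z
    simp [fderiv_add ((TestFn.diff u) z) ((TestFn.diff w) z)]
  map_smul' c u := by
    ext z
    simp [fderiv_const_smul ((TestFn.diff u) z) c]

/-- Multiplication by the smooth real function `b`, as an operator on test functions. -/
noncomputable def mulOp (b : SpaceTime n → ℝ) (hb : ContDiff ℝ (⊤ : ℕ∞) b) :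
    Module.End ℂ (TestFn n) where
  toFun u := ⟨fun z => (b z : ℂ) * u.1 z,
    (ofRealCLM.contDiff.comp hb).mul (TestFn.smooth u), (TestFn.compact u).mul_left⟩
  map_add' u w := by ext z; simp [mul_add]
  map_smul' c u := by ext z; simp; ring

/-- The inclusion of test functions in `L²`. -/
noncomputable def toL2 : TestFn n →ₗ[ℂ] Lp ℂ 2 (volume : Measure (SpaceTime n)) where
  toFun u := (TestFn.memLp u).toLp
  map_add' _ _ := rfl
  map_smul' _ _ := rfl

@[simp] theorem derivOp_apply (v : SpaceTime n) (u : TestFn n) (z : SpaceTime n) :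
    (derivOp v u : SpaceTime n → ℂ) z = fderiv ℝ (u : SpaceTime n → ℂ) z v := rfl

@[simp] theorem mulOp_apply (b : SpaceTime n → ℝ) (hb) (u : TestFn n) (z : SpaceTime n) :
    (mulOp b hb u : SpaceTime n → ℂ) z = b z * (u : SpaceTime n → ℂ) z := rfl

theorem coeFn_toL2 (u : TestFn n) : (toL2 u : SpaceTime n → ℂ) =ᵐ[volume] u.1 :=
  (TestFn.memLp u).coeFn_toLp

theorem inner_toL2 (u w : TestFn n) :
    inner ℂ (toL2 u) (toL2 w) = ∫ z, (starRingEnd ℂ) (u.1 z) * w.1 z := by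
  rw [L2.inner_def]
  refine integral_congr_ae ?_
  filter_upwards [coeFn_toL2 u, coeFn_toL2 w] with z h1 h2
  rw [h1, h2, RCLike.inner_apply, mul_comm]

theorem mulOp_symm (b : SpaceTime n → ℝ) (hb) : FSymm toL2 (mulOp b hb) := by
  intro u w
  rw [inner_toL2, inner_toL2]
  congr 1; ext z; simp; ring

/-- Integration by parts; the boundary terms vanish because of the compact support. -/
theorem derivOp_skew (v : SpaceTime n) : FSkew toL2 (derivOp v) := by
  intro u w
  rw [inner_toL2, inner_toL2]
  have hc : Differentiable ℝ (fun z => (starRingEnd ℂ) (u.1 z)) :=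
    conjCLE.differentiable.comp (TestFn.diff u)
  have hd : ∀ z, fderiv ℝ (fun z => (starRingEnd ℂ) (u.1 z)) z v
      = (starRingEnd ℂ) (fderiv ℝ u.1 z v) := by
    intro z
    have := (conjCLE.toContinuousLinearMap.hasFDerivAt.comp z
      ((TestFn.diff u) z).hasFDerivAt).fderiv
    have h2 := DFunLike.congr_fun this v
    exact h2
  have int : ∀ a c : TestFn n, Integrable (fun z => (starRingEnd ℂ) (a.1 z) * c.1 z) := by
    intro a c
    refine Continuous.integrable_of_hasCompactSupport ?_ (TestFn.compact c).mul_left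
    exact (continuous_conj.comp (TestFn.smooth a).continuous).mul (TestFn.smooth c).continuous
  have := integral_mul_fderiv_eq_neg_fderiv_mul_of_integrable
    (μ := (volume : Measure (SpaceTime n))) (f := fun z => (starRingEnd ℂ) (u.1 z))
    (g := w.1) (v := v)
    (by simp only [hd]; exact int (derivOp v u) w) (int u (derivOp v w)) (int u w)
    (fun x _ => hc x) (fun x _ => (TestFn.diff w) x)
  simp only [hd] at this
  change (∫ z, (starRingEnd ℂ) (fderiv ℝ u.1 z v) * w.1 z)
    = -∫ z, (starRingEnd ℂ) (u.1 z) * fderiv ℝ w.1 z v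
  rw [this, neg_neg]

theorem derivOp_comm (v w : SpaceTime n) : ⁅derivOp v, derivOp w⁆ = 0 := by
  rw [← commute_iff_lie_eq]
  ext u z
  change fderiv ℝ (fun y => fderiv ℝ u.1 y w) z v = fderiv ℝ (fun y => fderiv ℝ u.1 y v) z w
  have hd : DifferentiableAt ℝ (fderiv ℝ u.1) z :=
    ((TestFn.smooth u).fderiv_right (m := (⊤ : ℕ∞)) (by simp)).differentiable (by simp) z
  rw [fderiv_clm_apply hd (by fun_prop), fderiv_clm_apply hd (by fun_prop)]
  simp only [fderiv_fun_const, Pi.zero_apply, ContinuousLinearMap.comp_zero, zero_add,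
    ContinuousLinearMap.flip_apply]
  exact ((TestFn.smooth u).contDiffAt.isSymmSndFDerivAt
    (by simpa using WithTop.coe_le_coe.2 (le_top : (2 : ℕ∞) ≤ ⊤))) v w

theorem mulOp_comm (a b : SpaceTime n → ℝ) (ha hb) : ⁅mulOp a ha, mulOp b hb⁆ = 0 := by
  rw [← commute_iff_lie_eq]
  ext u z
  simp; ring

/-- The Leibniz rule: the commutator of a derivative with multiplication by `b` is
multiplication by the derivative of `b`. -/
theorem derivOp_mulOp (v : SpaceTime n) (b c : SpaceTime n → ℝ) (hb hc)
    (h : ∀ z, HasLineDerivAt ℝ b (c z) z v) :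
    ⁅derivOp v, mulOp b hb⁆ = mulOp c hc := by
  ext u z
  have hbd : HasFDerivAt b (fderiv ℝ b z) z := (hb.differentiable (by simp) z).hasFDerivAt
  have e : fderiv ℝ b z v = c z := (hbd.hasLineDerivAt v).unique (h z)
  have h1 : HasFDerivAt (fun y => (b y : ℂ)) (ofRealCLM.comp (fderiv ℝ b z)) z :=
    ofRealCLM.hasFDerivAt.comp z hbd
  have h2 := (h1.mul ((TestFn.diff u) z).hasFDerivAt).fderiv
  have h3 := DFunLike.congr_fun h2 v
  rw [Ring.lie_def]
  change fderiv ℝ (fun y => (b y : ℂ) * u.1 y) z v - b z * fderiv ℝ u.1 z v = c z * u.1 z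
  rw [show (fun y => (b y : ℂ) * u.1 y) = (fun y => (b y : ℂ)) * u.1 from rfl, h3]
  simp [e]
  ring

theorem norm_toL2 (u : TestFn n) : eLpNorm u.1 2 volume = ENNReal.ofReal ‖toL2 u‖ := by
  have h : ‖toL2 u‖ = (eLpNorm u.1 2 volume).toReal := Lp.norm_toLp u.1 (TestFn.memLp u)
  rw [h, ENNReal.ofReal_toReal (TestFn.memLp u).2.ne]

theorem fderiv_slice (g : SpaceTime n → ℂ) (hg : Differentiable ℝ g)
    (x v : EuclideanSpace ℝ (Fin n)) (t : ℝ) :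
    fderiv ℝ (fun y => g (y, t)) x v = fderiv ℝ g (x, t) (v, 0) := by
  have h1 : HasFDerivAt (fun y : EuclideanSpace ℝ (Fin n) => (y, t)) (.inl ℝ _ ℝ) x :=
    hasFDerivAt_prodMk_left x t
  have h2 := ((hg (x, t)).hasFDerivAt.comp x h1).fderiv
  have h3 := DFunLike.congr_fun h2 v
  simpa [Function.comp_def] using h3

theorem spatialLaplacian_slice (u : TestFn n) (z : SpaceTime n) :
    spatialLaplacian (fun y => u.1 (y, z.2)) z.1
      = ((∑ i, derivOp (EuclideanSpace.single i 1, 0) * derivOp (EuclideanSpace.single i 1, 0) :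
          Module.End ℂ (TestFn n)) u).1 z := by
  simp only [spatialLaplacian, LinearMap.sum_apply, Submodule.coe_sum, Finset.sum_apply,
    Module.End.mul_apply]
  refine Finset.sum_congr rfl fun i _ => ?_
  set e : EuclideanSpace ℝ (Fin n) := EuclideanSpace.single i 1
  have hs : ContDiff ℝ (⊤ : ℕ∞) (fun y => u.1 (y, z.2)) :=
    (TestFn.smooth u).comp (contDiff_id.prodMk contDiff_const)
  have hd : DifferentiableAt ℝ (fderiv ℝ (fun y => u.1 (y, z.2))) z.1 :=
    (hs.fderiv_right (m := (⊤ : ℕ∞)) (by simp)).differentiable (by simp) z.1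
  rw [iteratedFDeriv_two_apply]
  have h1 : fderiv ℝ (fun x => fderiv ℝ (fun y => u.1 (y, z.2)) x e) z.1 e
      = fderiv ℝ (fderiv ℝ (fun y => u.1 (y, z.2))) z.1 e e := by
    rw [fderiv_clm_apply hd (by fun_prop)]
    simp
  simp only [Matrix.cons_val_zero, Matrix.cons_val_one]
  rw [← h1]
  simp only [fderiv_slice u.1 (TestFn.diff u)]
  exact fderiv_slice (derivOp (e, 0) u).1 (TestFn.diff _) z.1 e z.2

theorem deriv_slice (u : TestFn n) (z : SpaceTime n) :
    deriv (fun s => u.1 (z.1, s)) z.2 = (derivOp (0, 1) u).1 z := by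
  have h1 : HasDerivAt (fun s : ℝ => (z.1, s)) ((0 : EuclideanSpace ℝ (Fin n)), (1 : ℝ)) z.2 :=
    (hasDerivAt_const _ _).prodMk (hasDerivAt_id _)
  exact ((TestFn.diff u (z.1, z.2)).hasFDerivAt.comp_hasDerivAt z.2 h1).deriv

end conc

/-! ### The quadratic weight -/

section weight
variable {n : ℕ}

/-- The `i`-th coordinate of the recentred and rescaled point `x / R + φ(t) e` at `z = (x, t)`. -/
noncomputable def yc (R : ℝ) (φ : ℝ → ℝ) (e : Fin n → ℝ) (i : Fin n) (z : SpaceTime n) : ℝ :=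
  R⁻¹ * z.1 i + φ z.2 * e i

theorem yc_contDiff (R : ℝ) (φ : ℝ → ℝ) (hφ : ContDiff ℝ (⊤ : ℕ∞) φ) (e : Fin n → ℝ) (i : Fin n) :
    ContDiff ℝ (⊤ : ℕ∞) (yc R φ e i) := by
  have h1 : ContDiff ℝ (⊤ : ℕ∞) (fun z : SpaceTime n => z.1 i) :=
    (EuclideanSpace.proj i : EuclideanSpace ℝ (Fin n) →L[ℝ] ℝ).contDiff.comp contDiff_fst
  have h2 : ContDiff ℝ (⊤ : ℕ∞) (fun z : SpaceTime n => φ z.2) := hφ.comp contDiff_snd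
  exact (contDiff_const.mul h1).add (h2.mul contDiff_const)

theorem yc_space (R : ℝ) (φ : ℝ → ℝ) (e : Fin n → ℝ) (i j : Fin n) (z : SpaceTime n) :
    HasLineDerivAt ℝ (yc R φ e j) (if i = j then R⁻¹ else 0) z (EuclideanSpace.single i 1, 0) := by
  have h := (((hasDerivAt_id (0 : ℝ)).mul_const (if j = i then (1 : ℝ) else 0)).const_add
    (z.1 j)).const_mul R⁻¹ |>.add_const (φ z.2 * e j)
  rw [HasLineDerivAt]
  convert h using 1
  · funext t; simp [yc]
  · by_cases hij : i = j
    · simp [hij]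
    · simp [hij, Ne.symm hij]

theorem yc_time (R : ℝ) (φ : ℝ → ℝ) (hφ : Differentiable ℝ φ) (e : Fin n → ℝ) (j : Fin n)
    (z : SpaceTime n) :
    HasLineDerivAt ℝ (yc R φ e j) (deriv φ z.2 * e j) z (0, 1) := by
  have h0 : HasDerivAt (fun t : ℝ => φ (z.2 + t)) (deriv φ z.2) 0 := by
    have := (hφ (z.2 + 0)).hasDerivAt.comp_const_add z.2 0
    simpa using this
  have h := (h0.mul_const (e j)).const_add (R⁻¹ * z.1 j)
  rw [HasLineDerivAt]
  convert h using 1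
  funext t; simp [yc]

/-- The squared Carleman estimate, with constant `1` and a general unit vector `e`. The operators
are `D i = ∂ᵢ`, `T = ∂ₜ`, and multiplication by `b i = ∂ᵢψ`, `q = ∂ₜψ`, `w = ∂ₜ²ψ`, and
by `γ i`, which satisfies `∂ₜ∂ᵢψ = 2h γ i`. -/
theorem weighted_bound (R σ K : ℝ) (hR : 0 < R) (hK : 0 < K) (hσ : (K + 1) * R ^ 2 ≤ σ)
    (φ : ℝ → ℝ) (hφ : ContDiff ℝ (⊤ : ℕ∞) φ) (hφ2 : ∀ t, |deriv (deriv φ) t| ≤ K)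
    (e : Fin n → ℝ) (he : ∑ i, e i ^ 2 = 1) (ψ : SpaceTime n → ℝ)
    (hψ : ∀ z, ψ z = σ * ∑ i, yc R φ e i z ^ 2) (hE : ContDiff ℝ (⊤ : ℕ∞) fun z => Real.exp (ψ z))
    (g : TestFn n) (hg : ∀ z, g.1 z ≠ 0 → 1 ≤ ∑ i, yc R φ e i z ^ 2) :
    σ ^ 3 / R ^ 4 * ‖toL2 (mulOp (fun z => Real.exp (ψ z)) hE g)‖ ^ 2
      ≤ ‖toL2 (mulOp (fun z => Real.exp (ψ z)) hE
          ((I • derivOp (0, 1) + ∑ i, derivOp (EuclideanSpace.single i 1, 0)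
            * derivOp (EuclideanSpace.single i 1, 0) : Module.End ℂ (TestFn n)) g))‖ ^ 2 := by
  have hσ0 : 0 < σ := lt_of_lt_of_le (by positivity) hσ
  have hφ' : ContDiff ℝ (⊤ : ℕ∞) (deriv φ) := (contDiff_infty_iff_deriv.1 hφ).2
  have hφ'' : ContDiff ℝ (⊤ : ℕ∞) (deriv (deriv φ)) := (contDiff_infty_iff_deriv.1 hφ').2
  have dφ : Differentiable ℝ φ := hφ.differentiable (by simp)
  have dφ' : Differentiable ℝ (deriv φ) := hφ'.differentiable (by simp)
  have cy := yc_contDiff (n := n) R φ hφ e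
  have c1 : ContDiff ℝ (⊤ : ℕ∞) (fun z : SpaceTime n => deriv φ z.2) := hφ'.comp contDiff_snd
  have c2 : ContDiff ℝ (⊤ : ℕ∞) (fun z : SpaceTime n => deriv (deriv φ) z.2) :=
    hφ''.comp contDiff_snd
  have cs : ContDiff ℝ (⊤ : ℕ∞) (fun z : SpaceTime n => ∑ i, e i * yc R φ e i z) :=
    ContDiff.sum fun i _ => contDiff_const.mul (cy i)
  set E : SpaceTime n → ℝ := fun z => Real.exp (ψ z) with hEdef
  let b : Fin n → SpaceTime n → ℝ := fun i z => 2 * σ / R * yc R φ e i z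
  have hb : ∀ i, ContDiff ℝ (⊤ : ℕ∞) (b i) := fun i => contDiff_const.mul (cy i)
  let γ : Fin n → SpaceTime n → ℝ := fun i z => R / 2 * e i * deriv φ z.2
  have hγ : ∀ i, ContDiff ℝ (⊤ : ℕ∞) (γ i) := fun i => contDiff_const.mul c1
  let q : SpaceTime n → ℝ := fun z => 2 * σ * (deriv φ z.2 * ∑ i, e i * yc R φ e i z)
  have hq : ContDiff ℝ (⊤ : ℕ∞) q := contDiff_const.mul (c1.mul cs)
  let w : SpaceTime n → ℝ := fun z =>
    2 * σ * (deriv (deriv φ) z.2 * ∑ i, e i * yc R φ e i z + deriv φ z.2 * deriv φ z.2)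
  have hw : ContDiff ℝ (⊤ : ℕ∞) w := contDiff_const.mul ((c2.mul cs).add (c1.mul c1))
  let D : Fin n → Module.End ℂ (TestFn n) := fun i => derivOp (EuclideanSpace.single i 1, 0)
  let T : Module.End ℂ (TestFn n) := derivOp (0, 1)
  let B : Fin n → Module.End ℂ (TestFn n) := fun i => mulOp (b i) (hb i)
  let G : Fin n → Module.End ℂ (TestFn n) := fun i => mulOp (γ i) (hγ i)
  let Q : Module.End ℂ (TestFn n) := mulOp q hq
  let W : Module.End ℂ (TestFn n) := mulOp w hw
  let M : Module.End ℂ (TestFn n) := mulOp E hE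
  -- The second spatial derivatives of `ψ` are `h δᵢⱼ`.
  let h : ℝ := 2 * σ / R ^ 2
  have dx : ∀ i (z : SpaceTime n), HasLineDerivAt ℝ (fun z : SpaceTime n => deriv φ z.2) 0 z
      (EuclideanSpace.single i 1, 0) := by
    intro i z
    rw [HasLineDerivAt]
    convert hasDerivAt_const (0 : ℝ) (deriv φ z.2) using 1
    funext t; simp
  have dt : ∀ (z : SpaceTime n), HasLineDerivAt ℝ (fun z : SpaceTime n => deriv φ z.2)
      (deriv (deriv φ) z.2) z (0, 1) := by
    intro z
    have := (dφ' (z.2 + 0)).hasDerivAt.comp_const_add z.2 0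
    rw [HasLineDerivAt]
    simpa using this
  have yx := yc_space (n := n) R φ e
  have yt := yc_time (n := n) R φ dφ e
  have lin_mul : ∀ (a c : SpaceTime n → ℝ) (a' c' : ℝ) (z v : SpaceTime n),
      HasLineDerivAt ℝ a a' z v → HasLineDerivAt ℝ c c' z v →
      HasLineDerivAt ℝ (fun z => a z * c z) (a' * c z + a z * c') z v := by
    intro a c a' c' z v ha hc
    have := HasDerivAt.fun_mul ha hc
    simpa [HasLineDerivAt] using this
  have lin_const : ∀ (k : ℝ) (c : SpaceTime n → ℝ) (c' : ℝ) (z v : SpaceTime n),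
      HasLineDerivAt ℝ c c' z v → HasLineDerivAt ℝ (fun z => k * c z) (k * c') z v :=
    fun k c c' z v hc => HasDerivAt.const_mul k hc
  have lin_sum : ∀ (c : Fin n → SpaceTime n → ℝ) (c' : Fin n → ℝ) (z v : SpaceTime n),
      (∀ i, HasLineDerivAt ℝ (c i) (c' i) z v) →
      HasLineDerivAt ℝ (fun z => ∑ i, c i z) (∑ i, c' i) z v :=
    fun c c' z v hc => HasDerivAt.fun_sum fun i _ => hc i
  have sx : ∀ i (z : SpaceTime n), HasLineDerivAt ℝ (fun z => ∑ i, e i * yc R φ e i z)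
      (e i * R⁻¹) z (EuclideanSpace.single i 1, 0) := by
    intro i z
    convert lin_sum _ _ z _ (fun j => lin_const (e j) _ _ z _ (yx i j z)) using 1
    simp
  have st : ∀ (z : SpaceTime n), HasLineDerivAt ℝ (fun z => ∑ i, e i * yc R φ e i z)
      (deriv φ z.2) z (0, 1) := by
    intro z
    convert lin_sum _ _ z _ (fun j => lin_const (e j) _ _ z _ (yt j z)) using 1
    calc deriv φ z.2 = deriv φ z.2 * ∑ i, e i ^ 2 := by rw [he, mul_one]
      _ = _ := by rw [Finset.mul_sum]; refine Finset.sum_congr rfl fun i _ => by ring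
  have ex : ∀ (v : SpaceTime n) (z : SpaceTime n) (y' : Fin n → ℝ),
      (∀ i, HasLineDerivAt ℝ (yc R φ e i) (y' i) z v) →
      HasLineDerivAt ℝ E (E z * (2 * σ * ∑ i, yc R φ e i z * y' i)) z v := by
    intro v z y' hy
    have h1 := lin_const σ _ _ z v
      (lin_sum _ _ z v (fun i => lin_mul _ _ _ _ z v (hy i) (hy i)))
    have h2 : HasLineDerivAt ℝ ψ (2 * σ * ∑ i, yc R φ e i z * y' i) z v := by
      convert h1 using 1
      · funext z; rw [hψ]; simp only [pow_two]
      · rw [mul_comm 2 σ, mul_assoc, Finset.mul_sum]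
        congr 1
        refine Finset.sum_congr rfl fun i _ => by ring
    have := HasDerivAt.exp h2
    simpa [HasLineDerivAt, E] using this
  have smul_mulOp : ∀ (k : ℝ) (a c : SpaceTime n → ℝ) (ha hc), (∀ z, c z = k * a z) →
      mulOp c hc = (k : ℂ) • mulOp a ha := by
    intro k a c ha hc hac
    ext u z
    simp [hac, mul_assoc]
  have hDB : ∀ i j, ⁅D i, B j⁆ = if i = j then (h : ℂ) • 1 else 0 := by
    intro i j
    have := derivOp_mulOp (EuclideanSpace.single i 1, 0) (b j)
      (fun _ => 2 * σ / R * (if i = j then R⁻¹ else 0)) (hb j) contDiff_const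
      (fun z => lin_const _ _ _ z _ (yx i j z))
    change ⁅D i, B j⁆ = _ at this
    rw [this]
    ext u z
    split_ifs
    · simp [h]; field_simp; simp
    · simp
  have hTB : ∀ i, ⁅T, B i⁆ = (2 * h : ℂ) • G i := by
    intro i
    have := derivOp_mulOp (0, 1) (b i) (fun z => 2 * σ / R * (deriv φ z.2 * e i)) (hb i)
      (contDiff_const.mul (c1.mul contDiff_const)) (fun z => lin_const _ _ _ z _ (yt i z))
    change ⁅T, B i⁆ = _ at this
    rw [this]
    have := smul_mulOp (2 * h) (γ i) (fun z => 2 * σ / R * (deriv φ z.2 * e i)) (hγ i)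
      (contDiff_const.mul (c1.mul contDiff_const))
      (fun z => by simp only [γ, h]; field_simp)
    simpa using this
  have hDQ : ∀ i, ⁅D i, Q⁆ = (2 * h : ℂ) • G i := by
    intro i
    have := derivOp_mulOp (EuclideanSpace.single i 1, 0) q
      (fun z => 2 * σ * (0 * (∑ i, e i * yc R φ e i z) + deriv φ z.2 * (e i * R⁻¹))) hq
      (contDiff_const.mul ((contDiff_const.mul cs).add (c1.mul contDiff_const)))
      (fun z => lin_const _ _ _ z _ (lin_mul _ _ _ _ z _ (dx i z) (sx i z)))
    change ⁅D i, Q⁆ = _ at this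
    rw [this]
    have := smul_mulOp (2 * h) (γ i) _ (hγ i)
      (contDiff_const.mul ((contDiff_const.mul cs).add (c1.mul contDiff_const)))
      (fun z => show 2 * σ * (0 * (∑ i, e i * yc R φ e i z) + deriv φ z.2 * (e i * R⁻¹)) = _ by
        simp only [γ, h]; field_simp; ring)
    simpa using this
  have hTQ : ⁅T, Q⁆ = W := derivOp_mulOp (0, 1) q w hq hw
    (fun z => lin_const _ _ _ z _ (lin_mul _ _ _ _ z _ (dt z) (st z)))
  have hDG : ∀ i, ⁅D i, G i⁆ = 0 := by
    intro i
    have := derivOp_mulOp (EuclideanSpace.single i 1, 0) (γ i) (fun _ => R / 2 * e i * 0) (hγ i)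
      contDiff_const (fun z => lin_const _ _ _ z _ (dx i z))
    refine this.trans ?_
    ext u z; simp
  have hDM : ∀ i, ⁅D i, M⁆ = B i * M := by
    intro i
    have hc : ContDiff ℝ (⊤ : ℕ∞) (fun z => b i z * E z) := (hb i).mul hE
    have := derivOp_mulOp (EuclideanSpace.single i 1, 0) E (fun z => b i z * E z) hE hc (fun z => by
      convert ex _ z _ (fun j => yx i j z) using 1
      simp [b]; ring)
    refine this.trans ?_
    ext u z
    simp [B, M, mul_assoc]
  have hTM : ⁅T, M⁆ = Q * M := by
    have hc : ContDiff ℝ (⊤ : ℕ∞) (fun z => q z * E z) := hq.mul hE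
    have := derivOp_mulOp (0, 1) E (fun z => q z * E z) hE hc (fun z => by
      convert ex _ z _ (fun j => yt j z) using 1
      have : ∑ i, yc R φ e i z * (deriv φ z.2 * e i) = deriv φ z.2 * ∑ i, e i * yc R φ e i z := by
        rw [Finset.mul_sum]; refine Finset.sum_congr rfl fun i _ => by ring
      rw [this]; simp only [q]; ring)
    refine this.trans ?_
    ext u z
    simp [Q, M, mul_assoc]
  have hconj : (I • (T - Q) + ∑ i, (D i - B i) * (D i - B i)) * M
      = M * (I • T + ∑ i, D i * D i) :=
    abstract_conj D B T Q M hDM hTM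
  have main := abstract_bound toL2 D B G T Q W h (by positivity) hDB
    (fun i j => derivOp_comm _ _) (fun i j => mulOp_comm _ _ _ _) (fun i => derivOp_comm _ _)
    hTB hDQ (fun i => mulOp_comm _ _ _ _) hDG hTQ (fun i => derivOp_skew _)
    (fun i => mulOp_symm _ _) (fun i => mulOp_symm _ _) (derivOp_skew _) (mulOp_symm _ _) (M g)
  have hc : (I • (T - Q) + ∑ i, (D i - B i) * (D i - B i)) (M g)
      = M ((I • T + ∑ i, D i * D i) g) := LinearMap.congr_fun hconj g
  rw [hc] at main
  refine le_trans ?_ main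
  set N := ∑ i, (4 * h : ℂ) • (B i * B i) + W - ∑ i, (4 * h : ℂ) • (G i * G i) with hN
  let Y : SpaceTime n → ℝ := fun z => ∑ i, yc R φ e i z ^ 2
  let m : SpaceTime n → ℝ := fun z => 32 * σ ^ 3 / R ^ 4 * Y z
    + 2 * σ * (deriv (deriv φ) z.2 * ∑ i, e i * yc R φ e i z)
  -- The `φ'²` term of `w` cancels exactly against `4h ∑ γ i²`, since `e` is a unit vector.
  have hNm : ∀ (u : TestFn n) z, (N u).1 z = m z * u.1 z := by
    intro u z
    have h1 : (N u).1 z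
        = ((∑ i, 4 * h * (b i z * b i z) + w z - ∑ i, 4 * h * (γ i z * γ i z) : ℝ) : ℂ)
          * u.1 z := by
      simp [hN, B, W, G, LinearMap.sum_apply, Finset.sum_apply, Finset.sum_mul, add_mul, sub_mul,
        mul_assoc]
    rw [h1]
    congr 2
    have h2 : ∑ i, 4 * h * (b i z * b i z) = 32 * σ ^ 3 / R ^ 4 * Y z := by
      simp only [Y]
      rw [Finset.mul_sum]
      refine Finset.sum_congr rfl fun i _ => ?_
      simp only [h, b]; field_simp; ring
    have h3 : ∑ i, 4 * h * (γ i z * γ i z) = 2 * σ * (deriv φ z.2 * deriv φ z.2) := by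
      calc _ = 2 * σ * (deriv φ z.2 * deriv φ z.2) * ∑ i, e i ^ 2 := by
            rw [Finset.mul_sum]
            refine Finset.sum_congr rfl fun i _ => ?_
            simp only [h, γ]; field_simp; ring
        _ = _ := by rw [he, mul_one]
    rw [h2, h3]
    simp only [w, m]; ring
  -- The term in the second derivative of `φ` is at most `2σK|y|²`, and `σ ≥ (K + 1)R²` gives
  -- `Kσ ≤ σ³/R⁴`, so it costs only two of the thirty-two copies of `σ³/R⁴ |y|²`.
  have hpos : ∀ z, 1 ≤ Y z → σ ^ 3 / R ^ 4 ≤ m z := by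
    intro z hz
    have cs2 : (∑ i, e i * yc R φ e i z) ^ 2 ≤ Y z := by
      have := Finset.sum_mul_sq_le_sq_mul_sq Finset.univ e (fun i => yc R φ e i z)
      rwa [he, one_mul] at this
    have h1 : |∑ i, e i * yc R φ e i z| ≤ Y z := by
      refine abs_le_of_sq_le_sq (cs2.trans ?_) (by linarith)
      nlinarith
    have h2 : -(K * Y z) ≤ deriv (deriv φ) z.2 * ∑ i, e i * yc R φ e i z := by
      have : |deriv (deriv φ) z.2 * ∑ i, e i * yc R φ e i z| ≤ K * Y z := by
        rw [abs_mul]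
        exact mul_le_mul (hφ2 _) h1 (abs_nonneg _) hK.le
      linarith [neg_abs_le (deriv (deriv φ) z.2 * ∑ i, e i * yc R φ e i z)]
    have h3 : (K + 1) ^ 2 * σ ≤ σ ^ 3 / R ^ 4 := by
      rw [le_div_iff₀ (by positivity)]
      have : ((K + 1) * R ^ 2) ^ 2 ≤ σ ^ 2 := pow_le_pow_left₀ (by positivity) hσ 2
      calc (K + 1) ^ 2 * σ * R ^ 4 = ((K + 1) * R ^ 2) ^ 2 * σ := by ring
        _ ≤ σ ^ 2 * σ := by gcongr
        _ = σ ^ 3 := by ring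
    have h4 : K * σ ≤ σ ^ 3 / R ^ 4 := le_trans (by gcongr; nlinarith) h3
    have h5 : 0 ≤ σ ^ 3 / R ^ 4 := by positivity
    simp only [m]
    have h6 : 32 * σ ^ 3 / R ^ 4 * Y z = 32 * (σ ^ 3 / R ^ 4 * Y z) := by ring
    rw [h6]
    have h7 : σ * -(K * Y z) ≤ σ * (deriv (deriv φ) z.2 * ∑ i, e i * yc R φ e i z) := by gcongr
    have h8 : K * σ * Y z ≤ σ ^ 3 / R ^ 4 * Y z := by gcongr
    have h9 : σ ^ 3 / R ^ 4 * 1 ≤ σ ^ 3 / R ^ 4 * Y z := by gcongr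
    linarith
  have hfin : 0 ≤
      (inner ℂ (toL2 (M g)) (toL2 (N (M g) - ((σ ^ 3 / R ^ 4 : ℝ) : ℂ) • M g))).re := by
    rw [inner_toL2]
    have : ∀ z, (starRingEnd ℂ) ((M g).1 z) * (N (M g) - ((σ ^ 3 / R ^ 4 : ℝ) : ℂ) • M g).1 z
        = (((m z - σ ^ 3 / R ^ 4) * normSq ((M g).1 z) : ℝ) : ℂ) := by
      intro z
      have : (N (M g) - ((σ ^ 3 / R ^ 4 : ℝ) : ℂ) • M g).1 z
          = (m z - σ ^ 3 / R ^ 4 : ℝ) * (M g).1 z := by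
        have e1 : (N (M g) - ((σ ^ 3 / R ^ 4 : ℝ) : ℂ) • M g).1 z
          = (N (M g)).1 z - ((σ ^ 3 / R ^ 4 : ℝ) : ℂ) * (M g).1 z := rfl
        rw [e1, hNm, ofReal_sub, sub_mul]
      rw [this, ofReal_mul, normSq_eq_conj_mul_self]; ring
    simp only [this]
    rw [integral_complex_ofReal, ofReal_re]
    refine integral_nonneg fun z => ?_
    by_cases hz : g.1 z = 0
    · have : (M g).1 z = 0 := by simp [M, hz]
      simp [this]
    · exact mul_nonneg (sub_nonneg.2 (hpos z (hg z hz))) (normSq_nonneg _)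
  rw [map_sub, inner_sub_right, sub_re, map_smul, inner_smul_right,
    inner_self_eq_norm_sq_to_K] at hfin
  have e2 : (((σ ^ 3 / R ^ 4 : ℝ) : ℂ) * ((‖toL2 (M g)‖ : ℝ) : ℂ) ^ 2).re
      = σ ^ 3 / R ^ 4 * ‖toL2 (M g)‖ ^ 2 := by
    rw [← ofReal_pow, ← ofReal_mul, ofReal_re]
  have := (sub_nonneg.1 hfin)
  exact e2 ▸ this

end weight

/-- Lemma (Carleman estimate with quadratic exponential weight centered along the
moving point `-Rφ(t)e₁`): for `σ ≥ cR²` and `g` smooth, compactly supported, with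
support in `{|x/R + φ(t)e₁| ≥ 1}`,
`(σ^{3/2}/R²)‖e^{σ|x/R+φ(t)e₁|²}g‖₂ ≤ c‖e^{σ|x/R+φ(t)e₁|²}(i∂ₜ+Δ)g‖₂`. -/
theorem carleman_moving_weight (n : ℕ) (hn : 1 ≤ n) (K : ℝ) (hK : 0 < K) :
    ∃ c : ℝ, 0 < c ∧
      ∀ (R : ℝ) (_ : 0 < R) (φ : ℝ → ℝ) (σ : ℝ)
        (g : EuclideanSpace ℝ (Fin n) × ℝ → ℂ),
        ContDiff ℝ (⊤ : ℕ∞) φ →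
        -- `sup|φ'| + sup|φ''| ≤ K`
        (∃ K₁ K₂ : ℝ, (∀ t, |deriv φ t| ≤ K₁) ∧ (∀ t, |deriv (deriv φ) t| ≤ K₂) ∧
          K₁ + K₂ ≤ K) →
        σ ≥ c * R ^ 2 →
        ContDiff ℝ (⊤ : ℕ∞) g → HasCompactSupport g →
        (Function.support g ⊆
          {z : EuclideanSpace ℝ (Fin n) × ℝ |
            1 ≤ ‖R⁻¹ • z.1 + φ z.2 • (EuclideanSpace.single (⟨0, hn⟩ : Fin n) (1:ℝ))‖}) →
        ENNReal.ofReal (σ ^ ((3:ℝ)/2) / R ^ 2) *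
            eLpNorm (fun z : EuclideanSpace ℝ (Fin n) × ℝ =>
              Real.exp (σ * ‖R⁻¹ • z.1 + φ z.2 • (EuclideanSpace.single (⟨0, hn⟩ : Fin n) (1:ℝ))‖ ^ 2)
                • g z) 2 volume
          ≤ ENNReal.ofReal c *
            eLpNorm (fun z : EuclideanSpace ℝ (Fin n) × ℝ =>
              Real.exp (σ * ‖R⁻¹ • z.1 + φ z.2 • (EuclideanSpace.single (⟨0, hn⟩ : Fin n) (1:ℝ))‖ ^ 2)
                • (Complex.I * deriv (fun s => g (z.1, s)) z.2
                    + spatialLaplacian (fun y => g (y, z.2)) z.1)) 2 volume := by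
  -- The estimate holds with constant `1`; `K + 1` is what the lower bound on `σ` requires.
  refine ⟨K + 1, by positivity, ?_⟩
  intro R hR φ σ g hφ ⟨K₁, K₂, hK1, hK2, hK12⟩ hσ hg hgc hsupp
  have hσ0 : 0 < σ := lt_of_lt_of_le (by positivity) hσ
  have hφ2 : ∀ t, |deriv (deriv φ) t| ≤ K := fun t =>
    (hK2 t).trans (by linarith [(abs_nonneg _).trans (hK1 0)])
  let e : Fin n → ℝ := fun i => if i = ⟨0, hn⟩ then 1 else 0
  have he : ∑ i, e i ^ 2 = 1 := by simp [e]
  have hnorm : ∀ z : SpaceTime n,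
      ‖R⁻¹ • z.1 + φ z.2 • (EuclideanSpace.single (⟨0, hn⟩ : Fin n) (1:ℝ))‖ ^ 2
        = ∑ i, yc R φ e i z ^ 2 := by
    intro z
    rw [EuclideanSpace.real_norm_sq_eq]
    refine Finset.sum_congr rfl fun i _ => ?_
    simp [yc, e]
  let ψ : SpaceTime n → ℝ := fun z =>
    σ * ‖R⁻¹ • z.1 + φ z.2 • (EuclideanSpace.single (⟨0, hn⟩ : Fin n) (1:ℝ))‖ ^ 2
  have hψ : ∀ z, ψ z = σ * ∑ i, yc R φ e i z ^ 2 := fun z => by simp only [ψ, hnorm]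
  have hE : ContDiff ℝ (⊤ : ℕ∞) fun z => Real.exp (ψ z) := by
    simp only [hψ]
    exact Real.contDiff_exp.comp
      (contDiff_const.mul (ContDiff.sum fun i _ => (yc_contDiff R φ hφ e i).pow 2))
  let u : TestFn n := ⟨g, hg, hgc⟩
  have key := weighted_bound R σ K hR hK hσ φ hφ hφ2 e he ψ hψ hE u (fun z hz => by
    have h1 : 1 ≤ ‖R⁻¹ • z.1 + φ z.2 • (EuclideanSpace.single (⟨0, hn⟩ : Fin n) (1:ℝ))‖ := hsupp hz
    rw [← hnorm z]
    nlinarith)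
  set F := (I • derivOp (0, 1) + ∑ i, derivOp (EuclideanSpace.single i 1, 0)
    * derivOp (EuclideanSpace.single i 1, 0) : Module.End ℂ (TestFn n)) u with hF
  have e1 : (fun z : EuclideanSpace ℝ (Fin n) × ℝ => Real.exp (ψ z) • g z)
      = (mulOp (fun z => Real.exp (ψ z)) hE u).1 := by
    funext z
    rw [mulOp_apply, real_smul]
  have e2 : (fun z : EuclideanSpace ℝ (Fin n) × ℝ => Real.exp (ψ z)
      • (Complex.I * deriv (fun s => g (z.1, s)) z.2
                    + spatialLaplacian (fun y => g (y, z.2)) z.1))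
      = (mulOp (fun z => Real.exp (ψ z)) hE F).1 := by
    funext z
    rw [mulOp_apply, real_smul]
    congr 1
    rw [show deriv (fun s => g (z.1, s)) z.2 = _ from deriv_slice u z,
      show spatialLaplacian (fun y => g (y, z.2)) z.1 = _ from spatialLaplacian_slice u z]
    rfl
  change ENNReal.ofReal (σ ^ ((3:ℝ)/2) / R ^ 2) *
    eLpNorm (fun z : EuclideanSpace ℝ (Fin n) × ℝ => Real.exp (ψ z) • g z) 2 volume
      ≤ ENNReal.ofReal (K + 1) * eLpNorm (fun z : EuclideanSpace ℝ (Fin n) × ℝ => Real.exp (ψ z)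
      • (Complex.I * deriv (fun s => g (z.1, s)) z.2
                    + spatialLaplacian (fun y => g (y, z.2)) z.1)) 2 volume
  rw [e1, e2, norm_toL2, norm_toL2, ← ENNReal.ofReal_mul (by positivity),
    ← ENNReal.ofReal_mul (by positivity)]
  refine ENNReal.ofReal_le_ofReal ?_
  have ha : (σ ^ ((3:ℝ)/2) / R ^ 2) ^ 2 = σ ^ 3 / R ^ 4 := by
    rw [div_pow, ← pow_mul, ← Real.rpow_mul_natCast hσ0.le, ← Real.rpow_natCast σ 3]
    norm_num
  rw [← ha, ← mul_pow] at key
  have h3 := le_of_sq_le_sq key (norm_nonneg _)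
  refine h3.trans (le_mul_of_one_le_left (norm_nonneg _) (by linarith))
end

section
/- Let n ≥ 1, let p ∈ (1,2), and let q = p/(p−1) be the conjugate exponent. There exists a constant c = c(n,p) ≥ 1 such that for every x ∈ ℝⁿ, (1/c) e^{|x|^p/p} ≤ ∫_{ℝⁿ} e^{λ·x − |λ|^q/q} |λ|^{n(q−2)/2} dλ ≤ c e^{|x|^p/p}. -/
/-!
The proof is Laplace's method, made uniform by an exact identity. Put `Φ(l) = ‖l‖^q / q` and write
`x = ∇Φ(m) = ‖m‖^(q-2) m`, so that `‖x‖^p / p = ‖m‖^q (1 - 1/q)`. The integrand divided by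
`exp (‖x‖^p / p)` is then `exp (-D) ‖l‖^α` with `D` the Bregman divergence of `Φ` and
`α = n (q - 2) / 2`, and it remains to bound its integral above and below uniformly in `m`.

By polarization and Young's inequality, `D ≥ ‖m‖^(q-2) ‖l - m‖² / 2` (`le_bregman`), while
`D ≥ ‖l‖^q / (2q)` once `‖l‖` exceeds a fixed multiple of `‖m‖` (`le_bregman_of_far`). The integrand
is hence at most a Gaussian around `m`, for which `‖m‖^α` is exactly the normalizing factor, plus
a fixed integrable function (`upper_bound`). Conversely `D ≤ A ‖m‖^(q-2) ‖l - m‖²` for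
`‖l‖ ≤ 2 ‖m‖` (`bregman_le`), so that a ball around `m` at the Gaussian scale, or a fixed ball if
`‖m‖ ≤ 1`, carries mass bounded below (`lower_bound`).
-/

open MeasureTheory Complex Filter Set
open scoped ENNReal RealInnerProductSpace

/-! ### Two-sided bounds on the Bregman divergence -/

/-- The Bregman divergence of `Φ(l) = ‖l‖^q / q` at `l` relative to `m`, i.e.
`Φ(l) - Φ(m) - ⟪∇Φ(m), l - m⟫` with `∇Φ(m) = ‖m‖^(q-2) m`, written out. -/
noncomputable def bregman {n : ℕ} (q : ℝ) (m l : EuclideanSpace ℝ (Fin n)) : ℝ :=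
  ‖m‖ ^ q * (1 - 1 / q) - ‖m‖ ^ (q - 2) * ⟪l, m⟫ + ‖l‖ ^ q / q

/-- Young's inequality, in the form saying that `y ↦ y ^ e` lies above its tangent at `x`. -/
lemma rpow_tangent_le {e x y : ℝ} (he : 1 < e) (hx : 0 ≤ x) (hy : 0 ≤ y) :
    e * (x ^ (e - 1) * y) ≤ (e - 1) * x ^ e + y ^ e := by
  have he0 : 0 < e := by linarith
  have h := Real.geom_mean_le_arith_mean2_weighted (w₁ := (e - 1) / e) (w₂ := 1 / e)
    (p₁ := x ^ e) (p₂ := y ^ e) (div_nonneg (by linarith) he0.le) (by positivity)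
    (by positivity) (by positivity) (by field_simp; ring)
  rw [← Real.rpow_mul hx, ← Real.rpow_mul hy, mul_div_cancel₀ _ he0.ne', mul_one_div_cancel he0.ne',
    Real.rpow_one] at h
  calc e * (x ^ (e - 1) * y) ≤ e * ((e - 1) / e * x ^ e + 1 / e * y ^ e) := by gcongr
    _ = _ := by field_simp

lemma rpow_sub_two_mul_sq {q b : ℝ} (hq : 2 < q) (hb : 0 ≤ b) : b ^ (q - 2) * b ^ 2 = b ^ q := by
  rw [← Real.rpow_natCast b 2, ← Real.rpow_add_of_nonneg hb (by linarith) (by norm_num)]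
  norm_num

/-- Polarization turns the divergence into a quadratic part and a radial remainder. -/
lemma bregman_eq {n : ℕ} {q : ℝ} (hq : 2 < q) (m l : EuclideanSpace ℝ (Fin n)) :
    bregman q m l = ‖m‖ ^ (q - 2) * ‖l - m‖ ^ 2 / 2 +
      (‖l‖ ^ q / q - ‖m‖ ^ (q - 2) * ‖l‖ ^ 2 / 2 + ‖m‖ ^ q * (1 / 2 - 1 / q)) := by
  have h := norm_sub_sq_real l m
  have h2 := rpow_sub_two_mul_sq hq (norm_nonneg m)
  rw [bregman, h]
  linear_combination (-1 / 2) * h2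

/-- The radial remainder is nonnegative by Young's inequality with exponents `q / 2` and
`q / (q - 2)`. -/
lemma le_bregman {n : ℕ} {q : ℝ} (hq : 2 < q) (m l : EuclideanSpace ℝ (Fin n)) :
    ‖m‖ ^ (q - 2) * ‖l - m‖ ^ 2 / 2 ≤ bregman q m l := by
  rw [bregman_eq hq]
  have h := rpow_tangent_le (e := q / 2) (x := ‖m‖ ^ 2) (y := ‖l‖ ^ 2) (by linarith)
    (by positivity) (by positivity)
  rw [← Real.rpow_natCast ‖m‖ 2, ← Real.rpow_mul (norm_nonneg m), ← Real.rpow_mul (norm_nonneg m),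
    ← Real.rpow_natCast ‖l‖ 2, ← Real.rpow_mul (norm_nonneg l)] at h
  have e1 : ((2 : ℕ) : ℝ) * (q / 2 - 1) = q - 2 := by push_cast; ring
  have e2 : ((2 : ℕ) : ℝ) * (q / 2) = q := by push_cast; ring
  rw [e1, e2, Real.rpow_natCast] at h
  have h3 : 0 ≤ (1 / q) * ((q / 2 - 1) * ‖m‖ ^ q + ‖l‖ ^ q -
      q / 2 * (‖m‖ ^ (q - 2) * ‖l‖ ^ 2)) :=
    mul_nonneg (by positivity) (by linarith)
  have h4 : (1 / q) * ((q / 2 - 1) * ‖m‖ ^ q + ‖l‖ ^ q - q / 2 * (‖m‖ ^ (q - 2) * ‖l‖ ^ 2)) =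
      ‖l‖ ^ q / q - ‖m‖ ^ (q - 2) * ‖l‖ ^ 2 / 2 + ‖m‖ ^ q * (1 / 2 - 1 / q) := by
    field_simp
    ring
  linarith

/-- Far from `m`, the divergence controls `‖l‖^q`. The threshold `q ^ (1 / (q - 2))` is the one
for which the term `‖m‖^(q-2) ‖l‖²` is at most `‖l‖^q / q`. -/
lemma le_bregman_of_far {n : ℕ} {q : ℝ} (hq : 2 < q) (m l : EuclideanSpace ℝ (Fin n))
    (h : q ^ (1 / (q - 2)) * ‖m‖ ≤ ‖l‖) :
    1 / (2 * q) * ‖l‖ ^ q ≤ bregman q m l := by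
  rw [bregman_eq hq]
  have hK : (q ^ (1 / (q - 2))) ^ (q - 2) = q := by
    rw [← Real.rpow_mul (by linarith), one_div_mul_cancel (by linarith), Real.rpow_one]
  have h1 : q * ‖m‖ ^ (q - 2) ≤ ‖l‖ ^ (q - 2) := by
    calc q * ‖m‖ ^ (q - 2) = (q ^ (1 / (q - 2)) * ‖m‖) ^ (q - 2) := by
          rw [Real.mul_rpow (by positivity) (norm_nonneg _), hK]
      _ ≤ _ := Real.rpow_le_rpow (by positivity) h (by linarith)
  have h2 : q * (‖m‖ ^ (q - 2) * ‖l‖ ^ 2) ≤ ‖l‖ ^ q := by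
    rw [← rpow_sub_two_mul_sq hq (norm_nonneg l), ← mul_assoc]
    gcongr
  have h3 : ‖m‖ ^ (q - 2) * ‖l‖ ^ 2 ≤ ‖l‖ ^ q / q := by
    rw [le_div_iff₀ (by linarith)]; linarith
  have h4 : 0 ≤ ‖m‖ ^ (q - 2) * ‖l - m‖ ^ 2 / 2 := by positivity
  have h5 : 0 ≤ ‖m‖ ^ q * (1 / 2 - 1 / q) := by
    apply mul_nonneg (by positivity)
    rw [sub_nonneg]; exact one_div_le_one_div_of_le (by norm_num) hq.le
  have h6 : 1 / (2 * q) * ‖l‖ ^ q = ‖l‖ ^ q / q / 2 := by field_simp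
  linarith

/-- The monotonicity gap of `t ↦ t ^ (q - 1)` is at most quadratic. -/
lemma sub_mul_rpow_sub_le {q a b M : ℝ} (hq : 2 < q) (ha : 0 ≤ a) (hb : 0 ≤ b)
    (haM : a ≤ M) (hbM : b ≤ M) :
    (a - b) * (a ^ (q - 1) - b ^ (q - 1)) ≤ (q - 1) * M ^ (q - 2) * (a - b) ^ 2 := by
  wlog hab : b ≤ a generalizing a b
  · have := this hb ha hbM haM (by linarith)
    nlinarith
  have h := rpow_tangent_le (e := q - 1) (by linarith) ha hb
  have e1 : q - 1 - 1 = q - 2 := by ring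
  have h1 : a ^ (q - 1) = a ^ (q - 2) * a := by
    rw [← Real.rpow_add_one' ha (by linarith)]; congr 1; ring
  rw [e1] at h
  have h2 : a ^ (q - 1) - b ^ (q - 1) ≤ (q - 1) * M ^ (q - 2) * (a - b) := by
    calc a ^ (q - 1) - b ^ (q - 1) ≤ (q - 1) * a ^ (q - 2) * (a - b) := by
          rw [h1] at h ⊢; linarith
      _ ≤ _ := by
        have : a ^ (q - 2) ≤ M ^ (q - 2) := Real.rpow_le_rpow ha haM (by linarith)
        have : 0 ≤ a - b := by linarith
        have : 0 ≤ q - 1 := by linarith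
        gcongr
  calc _ ≤ (a - b) * ((q - 1) * M ^ (q - 2) * (a - b)) :=
        mul_le_mul_of_nonneg_left h2 (by linarith)
    _ = _ := by ring

lemma bregman_le {n : ℕ} {q : ℝ} (hq : 2 < q) (m l : EuclideanSpace ℝ (Fin n))
    (h : ‖l‖ ≤ 2 * ‖m‖) :
    bregman q m l ≤ (1 / 2 + (q - 1) * 2 ^ (q - 2)) * (‖m‖ ^ (q - 2) * ‖l - m‖ ^ 2) := by
  rw [bregman_eq hq]
  have hm := norm_nonneg m
  have hl := norm_nonneg l
  have h1 := sub_mul_rpow_sub_le hq hl hm h (by linarith)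
  rw [Real.mul_rpow (by norm_num) hm] at h1
  have h2 : (‖l‖ - ‖m‖) ^ 2 ≤ ‖l - m‖ ^ 2 := by
    rw [← sq_abs (‖l‖ - ‖m‖)]
    have := abs_norm_sub_norm_le l m
    gcongr
  have h3 : (q - 1) * (2 ^ (q - 2) * ‖m‖ ^ (q - 2)) * (‖l‖ - ‖m‖) ^ 2 ≤
      (q - 1) * (2 ^ (q - 2) * ‖m‖ ^ (q - 2)) * ‖l - m‖ ^ 2 := by
    have : 0 ≤ q - 1 := by linarith
    gcongr
  have h4 := rpow_tangent_le (e := q) (by linarith) hl hm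
  have e1 : ∀ t : ℝ, 0 ≤ t → t ^ q = t ^ (q - 1) * t := fun t ht => by
    rw [← Real.rpow_add_one' ht (by linarith)]; congr 1; ring
  have e2 : ∀ t : ℝ, 0 ≤ t → t ^ (q - 1) = t ^ (q - 2) * t := fun t ht => by
    rw [← Real.rpow_add_one' ht (by linarith)]; congr 1; ring
  -- The tangent inequality for `t ^ q` at `‖l‖`, divided by `q`.
  have h5 : ‖l‖ ^ q / q - ‖m‖ ^ q / q ≤ ‖l‖ ^ (q - 1) * (‖l‖ - ‖m‖) := by
    rw [← sub_div, div_le_iff₀ (by linarith)]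
    have := e1 _ hl
    nlinarith
  have h6 : ‖l‖ ^ q / q - ‖m‖ ^ (q - 2) * ‖l‖ ^ 2 / 2 + ‖m‖ ^ q * (1 / 2 - 1 / q) ≤
      (‖l‖ - ‖m‖) * (‖l‖ ^ (q - 1) - ‖m‖ ^ (q - 1)) := by
    have h7 : 0 ≤ ‖m‖ ^ (q - 2) * (‖l‖ - ‖m‖) ^ 2 / 2 := by positivity
    have h8 := e1 _ hm
    have h9 := e2 _ hm
    have : ‖m‖ ^ q * (1 / 2 - 1 / q) = ‖m‖ ^ (q - 2) * ‖m‖ * ‖m‖ / 2 - ‖m‖ ^ q / q := by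
      rw [← h9, ← h8]; ring
    rw [this, h9]
    nlinarith
  linarith

/-! ### Upper bound for the integral -/

lemma exp_inner_eq {n : ℕ} (q : ℝ) (m l : EuclideanSpace ℝ (Fin n)) :
    Real.exp (⟪l, ‖m‖ ^ (q - 2) • m⟫ - ‖l‖ ^ q / q) =
      Real.exp (‖m‖ ^ q * (1 - 1 / q)) * Real.exp (-bregman q m l) := by
  rw [← Real.exp_add, inner_smul_right, bregman]
  congr 1; ring

lemma integrable_tail (n : ℕ) (hn : 1 ≤ n) {q α : ℝ} (hq : 2 < q) (hα : 0 < α) :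
    Integrable (fun l : EuclideanSpace ℝ (Fin n) =>
      ‖l‖ ^ α * Real.exp (-(1 / (2 * q)) * ‖l‖ ^ q)) := by
  have : Nonempty (Fin n) := ⟨⟨0, hn⟩⟩
  rw [integrable_fun_norm_addHaar volume
    (f := fun t : ℝ => t ^ α * Real.exp (-(1 / (2 * q)) * t ^ q))]
  have h := integrableOn_rpow_mul_exp_neg_mul_rpow (p := q) (s := α + (n - 1 : ℕ))
    (b := 1 / (2 * q)) (lt_trans (by norm_num) (by positivity : (0 : ℝ) < α + (n - 1 : ℕ)))
    (by linarith) (by positivity)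
  refine h.congr_fun (fun t ht => ?_) measurableSet_Ioi
  have ht0 : 0 < t := ht
  simp only [finrank_euclideanSpace_fin, smul_eq_mul]
  rw [Real.rpow_add ht0, Real.rpow_natCast]
  ring

/-- The weight `‖m‖^(n(q-2)/2)` is the one that normalizes the Gaussian of variance
`‖m‖^(-(q-2))`; at `m = 0` the function vanishes. -/
lemma gaussian_part (n : ℕ) (hn : 1 ≤ n) {q : ℝ} (hq : 2 < q) (m : EuclideanSpace ℝ (Fin n)) :
    Integrable (fun l : EuclideanSpace ℝ (Fin n) =>
      ‖m‖ ^ ((n : ℝ) * (q - 2) / 2) * Real.exp (-(‖m‖ ^ (q - 2) * ‖l - m‖ ^ 2 / 2))) ∧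
    ∫ l : EuclideanSpace ℝ (Fin n),
      ‖m‖ ^ ((n : ℝ) * (q - 2) / 2) * Real.exp (-(‖m‖ ^ (q - 2) * ‖l - m‖ ^ 2 / 2)) ≤
      (2 * Real.pi) ^ ((n : ℝ) / 2) := by
  have hn' : (0 : ℝ) < n := by exact_mod_cast hn
  have hα : 0 < (n : ℝ) * (q - 2) / 2 := by
    have : 0 < q - 2 := by linarith
    positivity
  rcases eq_or_ne m 0 with rfl | hm
  · simp only [norm_zero, Real.zero_rpow hα.ne', zero_mul, integral_zero]
    exact ⟨integrable_zero _ _ _, by positivity⟩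
  have hm0 : 0 < ‖m‖ := norm_pos_iff.mpr hm
  have hb : 0 < ‖m‖ ^ (q - 2) / 2 := by positivity
  have hI := GaussianFourier.integral_rexp_neg_mul_sq_norm (V := EuclideanSpace ℝ (Fin n)) hb
  rw [finrank_euclideanSpace_fin] at hI
  have hint : Integrable (fun l : EuclideanSpace ℝ (Fin n) =>
      Real.exp (-(‖m‖ ^ (q - 2) / 2) * ‖l‖ ^ 2)) := by
    apply Integrable.of_integral_ne_zero
    rw [hI]; positivity
  have e : ∀ l : EuclideanSpace ℝ (Fin n), Real.exp (-(‖m‖ ^ (q - 2) * ‖l - m‖ ^ 2 / 2)) =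
      Real.exp (-(‖m‖ ^ (q - 2) / 2) * ‖l - m‖ ^ 2) := fun l => by congr 1; ring
  simp only [e]
  refine ⟨(hint.comp_sub_right m).const_mul _, le_of_eq ?_⟩
  rw [integral_const_mul,
    integral_sub_right_eq_self (fun l => Real.exp (-(‖m‖ ^ (q - 2) / 2) * ‖l‖ ^ 2)) m, hI]
  have e3 : ‖m‖ ^ ((n : ℝ) * (q - 2) / 2) = (‖m‖ ^ (q - 2)) ^ ((n : ℝ) / 2) := by
    rw [← Real.rpow_mul hm0.le]; congr 1; ring
  rw [e3, ← Real.mul_rpow (by positivity) (by positivity)]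
  congr 1
  field_simp

/-- Near `m` the weight is at most a multiple of `‖m‖^α` and the divergence is quadratic;
far from `m` the divergence beats the weight. -/
lemma integrand_le (n : ℕ) {q : ℝ} (hq : 2 < q) (m l : EuclideanSpace ℝ (Fin n)) :
    Real.exp (-bregman q m l) * ‖l‖ ^ ((n : ℝ) * (q - 2) / 2) ≤
      (q ^ (1 / (q - 2))) ^ ((n : ℝ) * (q - 2) / 2) *
        (‖m‖ ^ ((n : ℝ) * (q - 2) / 2) * Real.exp (-(‖m‖ ^ (q - 2) * ‖l - m‖ ^ 2 / 2))) +
      ‖l‖ ^ ((n : ℝ) * (q - 2) / 2) * Real.exp (-(1 / (2 * q)) * ‖l‖ ^ q) := by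
  have hα : 0 ≤ (n : ℝ) * (q - 2) / 2 := by
    have : 0 < q - 2 := by linarith
    positivity
  set α := (n : ℝ) * (q - 2) / 2
  have hq0 : 0 < q := by linarith
  rcases le_total ‖l‖ (q ^ (1 / (q - 2)) * ‖m‖) with h | h
  · have h1 : ‖l‖ ^ α ≤ (q ^ (1 / (q - 2))) ^ α * ‖m‖ ^ α := by
      rw [← Real.mul_rpow (by positivity) (norm_nonneg _)]
      exact Real.rpow_le_rpow (norm_nonneg _) h hα
    have h2 : Real.exp (-bregman q m l) ≤ Real.exp (-(‖m‖ ^ (q - 2) * ‖l - m‖ ^ 2 / 2)) :=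
      Real.exp_le_exp.mpr (neg_le_neg (le_bregman hq m l))
    refine le_add_of_le_of_nonneg ?_ (by positivity)
    calc _ ≤ Real.exp (-(‖m‖ ^ (q - 2) * ‖l - m‖ ^ 2 / 2)) *
          ((q ^ (1 / (q - 2))) ^ α * ‖m‖ ^ α) := by gcongr
      _ = _ := by ring
  · have h2 : Real.exp (-bregman q m l) ≤ Real.exp (-(1 / (2 * q)) * ‖l‖ ^ q) :=
      Real.exp_le_exp.mpr (by linarith [le_bregman_of_far hq m l h])
    refine le_add_of_nonneg_of_le (by positivity) ?_
    rw [mul_comm]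
    gcongr

lemma upper_bound (n : ℕ) (hn : 1 ≤ n) {q : ℝ} (hq : 2 < q) :
    ∃ C : ℝ, ∀ m : EuclideanSpace ℝ (Fin n),
      Integrable (fun l : EuclideanSpace ℝ (Fin n) =>
        Real.exp (-bregman q m l) * ‖l‖ ^ ((n : ℝ) * (q - 2) / 2)) ∧
      ∫ l : EuclideanSpace ℝ (Fin n),
        Real.exp (-bregman q m l) * ‖l‖ ^ ((n : ℝ) * (q - 2) / 2) ≤ C := by
  have hα : 0 < (n : ℝ) * (q - 2) / 2 := by
    have : 0 < q - 2 := by linarith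
    have hn' : (0 : ℝ) < n := by exact_mod_cast hn
    positivity
  have htail := integrable_tail n hn hq hα
  refine ⟨(q ^ (1 / (q - 2))) ^ ((n : ℝ) * (q - 2) / 2) * (2 * Real.pi) ^ ((n : ℝ) / 2) +
    ∫ l : EuclideanSpace ℝ (Fin n),
      ‖l‖ ^ ((n : ℝ) * (q - 2) / 2) * Real.exp (-(1 / (2 * q)) * ‖l‖ ^ q), fun m => ?_⟩
  obtain ⟨hg, hgi⟩ := gaussian_part n hn hq m
  have hg' := hg.const_mul ((q ^ (1 / (q - 2))) ^ ((n : ℝ) * (q - 2) / 2))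
  have hF : Integrable (fun l : EuclideanSpace ℝ (Fin n) =>
        Real.exp (-bregman q m l) * ‖l‖ ^ ((n : ℝ) * (q - 2) / 2)) := by
    refine (hg'.add htail).mono' ?_ (Eventually.of_forall fun l => ?_)
    · apply Measurable.aestronglyMeasurable
      unfold bregman
      fun_prop
    · rw [Real.norm_of_nonneg (by positivity)]
      exact integrand_le n hq m l
  refine ⟨hF, (integral_mono hF (hg'.add htail) (integrand_le n hq m)).trans ?_⟩
  rw [integral_add' hg' htail, integral_const_mul]
  have hq0 : 0 < q := by linarith
  gcongr

/-! ### Lower bound for the integral -/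

lemma le_integral_of_closedBall {n : ℕ} {f : EuclideanSpace ℝ (Fin n) → ℝ} (hf : Integrable f)
    (h0 : ∀ l, 0 ≤ f l) (v : EuclideanSpace ℝ (Fin n)) {r k : ℝ} (hr : 0 ≤ r)
    (h : ∀ l ∈ Metric.closedBall v r, k ≤ f l) :
    k * (r ^ n * volume.real (Metric.ball (0 : EuclideanSpace ℝ (Fin n)) 1)) ≤ ∫ l, f l := by
  have h1 := setIntegral_ge_of_const_le_real (μ := volume) Metric.isClosed_closedBall.measurableSet
    measure_closedBall_lt_top.ne h hf.integrableOn
  rw [Measure.addHaar_real_closedBall _ _ hr, finrank_euclideanSpace_fin] at h1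
  exact h1.trans (setIntegral_le_integral hf (Eventually.of_forall h0))

/-- For `‖m‖ ≥ 1` the mass of the ball of radius `‖m‖^(-(q-2)/2) / 2` around `m` suffices: the
divergence is bounded there, and the weight compensates the volume. For `‖m‖ ≤ 1` a fixed ball
avoiding the origin suffices. -/
lemma lower_bound (n : ℕ) (hn : 1 ≤ n) {q : ℝ} (hq : 2 < q) :
    ∃ k : ℝ, 0 < k ∧ ∀ m : EuclideanSpace ℝ (Fin n),
      k ≤ ∫ l : EuclideanSpace ℝ (Fin n),
        Real.exp (-bregman q m l) * ‖l‖ ^ ((n : ℝ) * (q - 2) / 2) := by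
  obtain ⟨C, hC⟩ := upper_bound n hn hq
  have hq2 : 0 < q - 2 := by linarith
  have hα : 0 ≤ (n : ℝ) * (q - 2) / 2 := by positivity
  have hV : 0 < volume.real (Metric.ball (0 : EuclideanSpace ℝ (Fin n)) 1) :=
    ENNReal.toReal_pos (Metric.measure_ball_pos _ _ one_pos).ne' measure_ball_lt_top.ne
  set V := volume.real (Metric.ball (0 : EuclideanSpace ℝ (Fin n)) 1)
  set A := 1 / 2 + (q - 1) * 2 ^ (q - 2)
  have hA : 0 ≤ A := by
    have : 0 ≤ q - 1 := by linarith
    positivity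
  have h0 : ∀ m l : EuclideanSpace ℝ (Fin n),
      0 ≤ Real.exp (-bregman q m l) * ‖l‖ ^ ((n : ℝ) * (q - 2) / 2) := fun m l => by positivity
  have hk1 : 0 < Real.exp (-A) * (1 / 2 : ℝ) ^ ((n : ℝ) * (q - 2) / 2) * ((1 / 2) ^ n * V) := by
    positivity
  have hk2 : 0 < Real.exp (-(1 + 3 + 3 ^ q / q)) * (1 ^ n * V) := by positivity
  refine ⟨min _ _, lt_min hk1 hk2, fun m => ?_⟩
  rcases le_total 1 ‖m‖ with hm | hm
  · refine (min_le_left _ _).trans ?_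
    have hm0 : 0 < ‖m‖ := by linarith
    have hr1 : ‖m‖ ^ (-((q - 2) / 2)) ≤ 1 :=
      Real.rpow_le_one_of_one_le_of_nonpos hm (by linarith)
    have hr2 : ‖m‖ ^ (q - 2) * (‖m‖ ^ (-((q - 2) / 2))) ^ 2 = 1 := by
      rw [← Real.rpow_natCast, ← Real.rpow_mul hm0.le, ← Real.rpow_add hm0]
      convert Real.rpow_zero _ using 2
      push_cast; ring
    have hr3 : ‖m‖ ^ ((n : ℝ) * (q - 2) / 2) * (‖m‖ ^ (-((q - 2) / 2))) ^ n = 1 := by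
      rw [← Real.rpow_natCast, ← Real.rpow_mul hm0.le, ← Real.rpow_add hm0]
      convert Real.rpow_zero _ using 2
      ring
    have hr0 : 0 < ‖m‖ ^ (-((q - 2) / 2)) := by positivity
    set r := ‖m‖ ^ (-((q - 2) / 2))
    have key := le_integral_of_closedBall (hC m).1 (h0 m) m (r := 1 / 2 * r)
      (k := Real.exp (-A) * (1 / 2 * ‖m‖) ^ ((n : ℝ) * (q - 2) / 2)) (by positivity) ?_
    · refine le_of_eq_of_le ?_ key
      rw [Real.mul_rpow (by norm_num) hm0.le, mul_pow]
      linear_combination (-Real.exp (-A) * (1 / 2 : ℝ) ^ ((n : ℝ) * (q - 2) / 2) *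
        (1 / 2) ^ n * V) * hr3
    · intro l hl
      rw [mem_closedBall_iff_norm] at hl
      have h1 : ‖l‖ ≤ 2 * ‖m‖ := by
        have := norm_le_norm_add_norm_sub' l m
        linarith
      have h2 : 1 / 2 * ‖m‖ ≤ ‖l‖ := by
        have := norm_le_norm_add_norm_sub l m
        linarith
      have h3 : bregman q m l ≤ A := by
        refine (bregman_le hq m l h1).trans (mul_le_of_le_one_right hA ?_)
        rw [← hr2]
        have : ‖l - m‖ ≤ r := by linarith
        gcongr
      gcongr
  · refine (min_le_right _ _).trans ?_
    have : Nonempty (Fin n) := ⟨⟨0, hn⟩⟩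
    obtain ⟨v, hv⟩ := exists_norm_eq (EuclideanSpace ℝ (Fin n)) (c := 2) (by norm_num)
    refine le_integral_of_closedBall (hC m).1 (h0 m) v zero_le_one fun l hl => ?_
    rw [mem_closedBall_iff_norm] at hl
    have h1 : ‖l‖ ≤ 3 := by
      have := norm_le_norm_add_norm_sub' l v
      linarith
    have h2 : 1 ≤ ‖l‖ := by
      have := norm_le_norm_add_norm_sub l v
      linarith
    have h3 : bregman q m l ≤ 1 + 3 + 3 ^ q / q := by
      unfold bregman
      have a1 : ‖m‖ ^ q * (1 - 1 / q) ≤ 1 :=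
        mul_le_one₀ (Real.rpow_le_one (norm_nonneg _) hm (by linarith))
          (by rw [sub_nonneg, div_le_one (by linarith)]; linarith)
          (by have : 0 < 1 / q := by positivity
              linarith)
      have a2 : -(‖m‖ ^ (q - 2) * ⟪l, m⟫) ≤ 3 := by
        have b1 : ‖m‖ ^ (q - 2) ≤ 1 := Real.rpow_le_one (norm_nonneg _) hm hq2.le
        have b2 : |⟪l, m⟫| ≤ 3 := by
          refine (abs_real_inner_le_norm l m).trans ?_
          nlinarith [norm_nonneg m, norm_nonneg l]
        calc _ ≤ |‖m‖ ^ (q - 2) * ⟪l, m⟫| := neg_le_abs _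
          _ = ‖m‖ ^ (q - 2) * |⟪l, m⟫| := by rw [abs_mul, abs_of_nonneg (by positivity)]
          _ ≤ 1 * 3 := by gcongr
          _ = 3 := one_mul _
      have a3 : ‖l‖ ^ q / q ≤ 3 ^ q / q := by gcongr
      linarith
    calc Real.exp (-(1 + 3 + 3 ^ q / q)) = Real.exp (-(1 + 3 + 3 ^ q / q)) * 1 := (mul_one _).symm
      _ ≤ _ := by
        have := Real.one_le_rpow h2 hα
        gcongr

/-! ### Dual variable and comparison -/

/-- `m = ‖x‖^(p-2) x` inverts the gradient map `m ↦ ‖m‖^(q-2) m`. -/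
lemma exists_dual {n : ℕ} {p q : ℝ} (hp1 : 1 < p) (hq : q = p / (p - 1))
    (x : EuclideanSpace ℝ (Fin n)) :
    ∃ m : EuclideanSpace ℝ (Fin n), x = ‖m‖ ^ (q - 2) • m ∧ ‖x‖ ^ p = ‖m‖ ^ q := by
  have hp : p - 1 ≠ 0 := by linarith
  rcases eq_or_ne x 0 with rfl | hx
  · refine ⟨0, by simp, ?_⟩
    have : q ≠ 0 := by rw [hq]; exact div_ne_zero (by linarith) hp
    rw [norm_zero, Real.zero_rpow (by linarith), Real.zero_rpow this]
  have hx0 : 0 < ‖x‖ := norm_pos_iff.mpr hx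
  have hnorm : ‖‖x‖ ^ (p - 2) • x‖ = ‖x‖ ^ (p - 1) := by
    rw [norm_smul, Real.norm_of_nonneg (by positivity), ← Real.rpow_add_one hx0.ne']
    congr 1; ring
  refine ⟨‖x‖ ^ (p - 2) • x, ?_, ?_⟩
  · rw [hnorm, smul_smul, ← Real.rpow_mul hx0.le, ← Real.rpow_add hx0]
    have : (p - 1) * (q - 2) + (p - 2) = 0 := by rw [hq]; field_simp; ring
    rw [this, Real.rpow_zero, one_smul]
  · rw [hnorm, ← Real.rpow_mul hx0.le]
    congr 1
    rw [hq]; field_simp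

/-- Appendix estimate: for `1 < p < 2` with conjugate exponent `q = p/(p-1)`, the
superquadratic weight `e^{|x|^p/p}` is comparable to the average
`∫ e^{λ·x - |λ|^q/q}|λ|^{n(q-2)/2} dλ` of linear exponential weights. -/
theorem exp_weight_average_comparison
    (n : ℕ) (hn : 1 ≤ n) (p q : ℝ) (hp1 : 1 < p) (hp2 : p < 2)
    (hq : q = p / (p - 1)) :
    ∃ c : ℝ, 1 ≤ c ∧
      ∀ x : EuclideanSpace ℝ (Fin n),
        (1 / c) * Real.exp (‖x‖ ^ p / p)
            ≤ (∫ l : EuclideanSpace ℝ (Fin n),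
                Real.exp (⟪l, x⟫ - ‖l‖ ^ q / q) * ‖l‖ ^ ((n : ℝ) * (q - 2) / 2)) ∧
          (∫ l : EuclideanSpace ℝ (Fin n),
              Real.exp (⟪l, x⟫ - ‖l‖ ^ q / q) * ‖l‖ ^ ((n : ℝ) * (q - 2) / 2))
            ≤ c * Real.exp (‖x‖ ^ p / p) := by
  have hp : 0 < p - 1 := by linarith
  have hq2 : 2 < q := by rw [hq, lt_div_iff₀ hp]; linarith
  have hpq : 1 / p = 1 - 1 / q := by rw [hq]; field_simp; ring
  obtain ⟨C, hC⟩ := upper_bound n hn hq2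
  obtain ⟨k, hk, hkb⟩ := lower_bound n hn hq2
  refine ⟨max 1 (max C (1 / k)), le_max_left _ _, fun x => ?_⟩
  obtain ⟨m, hx, hxm⟩ := exists_dual hp1 hq x
  have hexp : ‖x‖ ^ p / p = ‖m‖ ^ q * (1 - 1 / q) := by rw [hxm, ← hpq]; ring
  have hint : (∫ l : EuclideanSpace ℝ (Fin n),
      Real.exp (⟪l, x⟫ - ‖l‖ ^ q / q) * ‖l‖ ^ ((n : ℝ) * (q - 2) / 2)) =
      Real.exp (‖x‖ ^ p / p) * ∫ l : EuclideanSpace ℝ (Fin n),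
        Real.exp (-bregman q m l) * ‖l‖ ^ ((n : ℝ) * (q - 2) / 2) := by
    rw [hexp, hx, ← integral_const_mul]
    simp only [exp_inner_eq, mul_assoc]
  rw [hint, mul_comm (1 / _), mul_comm (max _ _)]
  constructor
  · gcongr
    refine le_trans ?_ (hkb m)
    rw [one_div_le (by positivity) hk]
    exact (le_max_right _ _).trans (le_max_right _ _)
  · gcongr
    exact (hC m).2.trans ((le_max_left _ _).trans (le_max_right _ _))
end

section
/- Let n ≥ 2 be an integer. There exists a constant c ≥ 1, depending only on n, such that for every μ > 1, (1/c) e^{μ} μ^{−(n−1)/2} ≤ ∫₀^π e^{μ cos θ} (sin θ)^{n−2} dθ ≤ c e^{μ} μ^{−(n−1)/2}. -/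
open MeasureTheory Filter Set
open scoped ENNReal

/-!
The mass of the integral sits at angles `θ` of size `μ^{-1/2}`. With `m = n - 2`:

* Upper bound: `cos θ ≤ 1 - (2/π²) θ²` on `[0, π]` and `sin θ ≤ θ`, so the integral is at most
  `e^μ ∫₀^∞ θ^m e^{-(2μ/π²) θ²} dθ`, a Gamma integral equal to a constant times
  `μ^{-(m+1)/2}`.
* Lower bound: the integrand is nonnegative, so one may restrict to `[0, μ^{-1/2}]`. There
  `cos θ ≥ 1 - θ²/2` gives `e^{μ cos θ} ≥ e^{μ - 1/2}`, and Jordan's inequality gives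
  `sin θ ≥ (2/π) θ`.
-/

lemma spherical_upper (m : ℕ) {μ : ℝ} (hμ : 1 < μ) :
    (∫ θ in (0:ℝ)..Real.pi, Real.exp (μ * Real.cos θ) * Real.sin θ ^ m)
      ≤ ((2 / Real.pi ^ 2) ^ (-((m : ℝ) + 1) / 2) * (1 / 2) * Real.Gamma (((m : ℝ) + 1) / 2))
        * Real.exp μ * μ ^ (-((m : ℝ) + 1) / 2) := by
  have hpi := Real.pi_pos
  have hm : (-1 : ℝ) < m := by linarith [(Nat.cast_nonneg m : (0 : ℝ) ≤ m)]
  set b : ℝ := 2 / Real.pi ^ 2 with hb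
  have hb0 : 0 < b := by positivity
  have hμ0 : 0 < μ := by linarith
  have hint : IntegrableOn
      (fun x : ℝ => Real.exp μ * (x ^ (m : ℝ) * Real.exp (-(b * μ) * x ^ (2 : ℝ)))) (Ioi 0) :=
    (integrableOn_rpow_mul_exp_neg_mul_rpow hm two_pos (mul_pos hb0 hμ0)).const_mul _
  have hval := integral_rpow_mul_exp_neg_mul_rpow two_pos hm (mul_pos hb0 hμ0)
  rw [intervalIntegral.integral_of_le hpi.le]
  calc _ ≤ ∫ x in Ioc 0 Real.pi,
          Real.exp μ * (x ^ (m : ℝ) * Real.exp (-(b * μ) * x ^ (2 : ℝ))) := by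
        refine setIntegral_mono_on ?_ (hint.mono_set Ioc_subset_Ioi_self) measurableSet_Ioc ?_
        · exact (Continuous.integrableOn_Icc (by fun_prop)).mono_set Ioc_subset_Icc_self
        · intro x hx
          have hs0 : 0 ≤ Real.sin x := Real.sin_nonneg_of_nonneg_of_le_pi hx.1.le hx.2
          have hc := Real.cos_le_one_sub_mul_cos_sq (x := x)
            (by rw [abs_of_pos hx.1]; exact hx.2)
          rw [Real.rpow_natCast, Real.rpow_two,
            show Real.exp μ * (x ^ m * Real.exp (-(b * μ) * x ^ 2))
              = Real.exp (μ * (1 - b * x ^ 2)) * x ^ m by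
                rw [show μ * (1 - b * x ^ 2) = μ + -(b * μ) * x ^ 2 by ring, Real.exp_add]; ring]
          gcongr
          exact Real.sin_le hx.1.le
    _ ≤ ∫ x in Ioi 0, Real.exp μ * (x ^ (m : ℝ) * Real.exp (-(b * μ) * x ^ (2 : ℝ))) := by
        refine setIntegral_mono_set hint ?_ Ioc_subset_Ioi_self.eventuallyLE
        filter_upwards [self_mem_ae_restrict measurableSet_Ioi] with x hx
        have : (0 : ℝ) < x := hx
        simp only [Pi.zero_apply]
        positivity
    _ = _ := by
        rw [integral_const_mul, hval, Real.mul_rpow hb0.le hμ0.le]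
        ring

lemma spherical_lower (m : ℕ) {μ : ℝ} (hμ : 1 < μ) :
    (Real.exp (-1 / 2) * (2 / Real.pi) ^ m / ((m : ℝ) + 1))
        * Real.exp μ * μ ^ (-((m : ℝ) + 1) / 2)
      ≤ ∫ θ in (0:ℝ)..Real.pi, Real.exp (μ * Real.cos θ) * Real.sin θ ^ m := by
  have hpi := Real.pi_gt_three
  have hμ0 : 0 < μ := by linarith
  set δ : ℝ := μ ^ (-(1 : ℝ) / 2) with hδ
  have hδ0 : 0 < δ := Real.rpow_pos_of_pos hμ0 _
  have hδ1 : δ ≤ 1 := Real.rpow_le_one_of_one_le_of_nonpos hμ.le (by norm_num)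
  have hδ2 : μ * δ ^ 2 = 1 := by
    rw [hδ, ← Real.rpow_natCast, ← Real.rpow_mul hμ0.le]
    norm_num [Real.rpow_neg_one, hμ0.ne']
  have hδm : δ ^ (m + 1) = μ ^ (-((m : ℝ) + 1) / 2) := by
    rw [hδ, ← Real.rpow_natCast, ← Real.rpow_mul hμ0.le]
    congr 1
    push_cast
    ring
  have hcont : Continuous fun θ : ℝ => Real.exp (μ * Real.cos θ) * Real.sin θ ^ m := by fun_prop
  calc _ = ∫ θ in (0:ℝ)..δ, Real.exp (μ - 1 / 2) * (2 / Real.pi * θ) ^ m := by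
        simp_rw [mul_pow]
        rw [intervalIntegral.integral_const_mul, intervalIntegral.integral_const_mul,
          integral_pow, hδm, show μ - 1 / 2 = -1 / 2 + μ by ring, Real.exp_add]
        simp
        ring
    _ ≤ ∫ θ in (0:ℝ)..δ, Real.exp (μ * Real.cos θ) * Real.sin θ ^ m := by
        refine intervalIntegral.integral_mono_on hδ0.le
          (Continuous.intervalIntegrable (by fun_prop) _ _) (hcont.intervalIntegrable _ _) ?_
        intro x hx
        have hx0 : 0 ≤ x := hx.1
        have hxδ : x ^ 2 ≤ δ ^ 2 := by gcongr; exact hx.2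
        have hc := Real.one_sub_sq_div_two_le_cos (x := x)
        gcongr
        · nlinarith
        · exact Real.mul_le_sin hx0 (by linarith [hx.2])
    _ ≤ _ := by
        refine intervalIntegral.integral_mono_interval le_rfl hδ0.le (by linarith) ?_
          (hcont.intervalIntegrable _ _)
        filter_upwards [self_mem_ae_restrict measurableSet_Ioc] with x hx
        have hs0 : 0 ≤ Real.sin x := Real.sin_nonneg_of_nonneg_of_le_pi hx.1.le hx.2
        simp only [Pi.zero_apply]
        positivity

/-- Two-sided asymptotics of the spherical integral `∫₀^π e^{μcosθ}(sinθ)^{n-2}dθ`: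
it is comparable to `e^μ μ^{-(n-1)/2}`, uniformly for `μ > 1`. -/
theorem spherical_integral_asymptotics (n : ℕ) (hn : 2 ≤ n) :
    ∃ c : ℝ, 1 ≤ c ∧
      ∀ μ : ℝ, 1 < μ →
        (1 / c) * Real.exp μ * μ ^ (-((n : ℝ) - 1) / 2)
            ≤ (∫ θ in (0:ℝ)..Real.pi, Real.exp (μ * Real.cos θ) * Real.sin θ ^ (n - 2)) ∧
          (∫ θ in (0:ℝ)..Real.pi, Real.exp (μ * Real.cos θ) * Real.sin θ ^ (n - 2))
            ≤ c * Real.exp μ * μ ^ (-((n : ℝ) - 1) / 2) := by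
  obtain ⟨m, rfl⟩ := Nat.exists_eq_add_of_le' hn
  have hexp : -(((m + 2 : ℕ) : ℝ) - 1) / 2 = -((m : ℝ) + 1) / 2 := by push_cast; ring
  rw [hexp, Nat.add_sub_cancel]
  set A : ℝ := (2 / Real.pi ^ 2) ^ (-((m : ℝ) + 1) / 2) * (1 / 2)
    * Real.Gamma (((m : ℝ) + 1) / 2) with hA
  set B : ℝ := Real.exp (-1 / 2) * (2 / Real.pi) ^ m / ((m : ℝ) + 1) with hB
  have hB0 : 0 < B := by have := Real.pi_pos; positivity
  refine ⟨max 1 (max A (1 / B)), le_max_left _ _, fun μ hμ => ⟨?_, ?_⟩⟩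
  · have hle : 1 / max 1 (max A (1 / B)) ≤ B :=
      (one_div_le (lt_max_of_lt_left one_pos) hB0).2
        ((le_max_right _ _).trans (le_max_right _ _))
    refine le_trans ?_ (spherical_lower m hμ)
    exact mul_le_mul_of_nonneg_right (mul_le_mul_of_nonneg_right hle (Real.exp_pos _).le)
      (Real.rpow_nonneg (by linarith) _)
  · refine (spherical_upper m hμ).trans ?_
    gcongr
    exact (le_max_left _ _).trans (le_max_right _ _)
end
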